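/- Let n ≥ 1 be an integer, δ ∈ (0, n], α, β ∈ [0, ∞), b ∈ L^∞(ℝⁿ, ℋ^δ_∞), and g₁, g₂ ∈ L¹_loc(ℝⁿ, ℋ^δ_∞). Suppose M_{ℋ^δ_∞} gᵢ(x) < ∞ for ℋ^δ_∞-a.e. x ∈ ℝⁿ for i = 1, 2, and that the function x ↦ e^{b(x)} (M_{ℋ^δ_∞} g₁(x))^α (M_{ℋ^δ_∞} g₂(x))^β is ℋ^δ_∞-quasicontinuous. Then the function x ↦ α · ln(M_{ℋ^δ_∞} g₁(x)) + β · ln(M_{ℋ^δ_∞} g₂(x)) + b(x) belongs to BMO(ℝⁿ, ℋ^δ_∞). -/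

import Mathlib

open scoped ENNReal
open Set MeasureTheory

noncomputable section

/-- An axis-parallel cube in `ℝⁿ`, described by its lower corner and positive side length. -/
structure Cube (n : ℕ) where
  corner : Fin n → ℝ
  side : ℝ
  side_pos : 0 < side

namespace Cube

/-- The half-open cube `∏ᵢ [cornerᵢ, cornerᵢ + side)` as a set of points. -/
def toSet {n : ℕ} (Q : Cube n) : Set (Fin n → ℝ) :=
  {x | ∀ i, Q.corner i ≤ x i ∧ x i < Q.corner i + Q.side}

/-- A cube is dyadic if it has the form `2^k·(z + [0,1)ⁿ)` with `k ∈ ℤ`, `z ∈ ℤⁿ`. -/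
def IsDyadic {n : ℕ} (Q : Cube n) : Prop :=
  ∃ (k : ℤ) (z : Fin n → ℤ), Q.side = (2:ℝ) ^ k ∧ ∀ i, Q.corner i = (z i : ℝ) * (2:ℝ) ^ k

/-- `Q'` is a dyadic subcube of `Q`, i.e. obtained from `Q` by repeated bisection. -/
def IsDyadicSubcube {n : ℕ} (Q' Q : Cube n) : Prop :=
  ∃ (k : ℕ) (z : Fin n → ℕ), (∀ i, z i < 2 ^ k) ∧
    Q'.side = Q.side / 2 ^ k ∧ ∀ i, Q'.corner i = Q.corner i + (z i : ℝ) * (Q.side / 2 ^ k)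

/-- The concentric dilate `t·Q` of a cube. -/
def dilate {n : ℕ} (Q : Cube n) (t : ℝ) (ht : 0 < t) : Cube n :=
  ⟨fun i => Q.corner i + Q.side / 2 - t * Q.side / 2, t * Q.side, mul_pos ht Q.side_pos⟩

end Cube

/-- The Hausdorff content `ℋ^δ_∞`. -/
def hContent (n : ℕ) (δ : ℝ) (E : Set (Fin n → ℝ)) : ℝ≥0∞ :=
  ⨅ (Qs : ℕ → Cube n) (_ : E ⊆ ⋃ i, (Qs i).toSet), ∑' i, ENNReal.ofReal ((Qs i).side ^ δ)

/-- The dyadic Hausdorff content `~ℋ^δ_∞`. -/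
def dContent (n : ℕ) (δ : ℝ) (E : Set (Fin n → ℝ)) : ℝ≥0∞ :=
  ⨅ (Qs : ℕ → Cube n) (_ : (∀ i, (Qs i).IsDyadic) ∧ E ⊆ ⋃ i, (Qs i).toSet),
    ∑' i, ENNReal.ofReal ((Qs i).side ^ δ)

/-- The Choquet integral `∫_E f dℋ^δ_∞`. -/
def integH (n : ℕ) (δ : ℝ) (f : (Fin n → ℝ) → ℝ) (E : Set (Fin n → ℝ)) : ℝ≥0∞ :=
  ∫⁻ t in Ioi (0:ℝ), hContent n δ {x | x ∈ E ∧ t < f x}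

/-- The Choquet integral `∫_E f d~ℋ^δ_∞` w.r.t. the dyadic Hausdorff content. -/
def integD (n : ℕ) (δ : ℝ) (f : (Fin n → ℝ) → ℝ) (E : Set (Fin n → ℝ)) : ℝ≥0∞ :=
  ∫⁻ t in Ioi (0:ℝ), dContent n δ {x | x ∈ E ∧ t < f x}

/-- A property holds `ℋ^δ_∞`-a.e. -/
def AEContent (n : ℕ) (δ : ℝ) (P : (Fin n → ℝ) → Prop) : Prop :=
  hContent n δ {x | ¬ P x} = 0

/-- `ℋ^δ_∞`-quasicontinuity. -/
def QuasiCont (n : ℕ) (δ : ℝ) (f : (Fin n → ℝ) → ℝ) : Prop :=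
  ∀ ε : ℝ, 0 < ε → ∃ O : Set (Fin n → ℝ),
    IsOpen O ∧ hContent n δ O < ENNReal.ofReal ε ∧ ContinuousOn f Oᶜ

/-- `L¹_loc(ℝⁿ, ℋ^δ_∞)`. -/
def MemL1loc (n : ℕ) (δ : ℝ) (f : (Fin n → ℝ) → ℝ) : Prop :=
  QuasiCont n δ f ∧ ∀ K : Set (Fin n → ℝ), IsCompact K → integH n δ (fun x => |f x|) K < ⊤

/-- `L^∞(ℝⁿ, ℋ^δ_∞)`. -/
def MemLinf (n : ℕ) (δ : ℝ) (f : (Fin n → ℝ) → ℝ) : Prop :=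
  QuasiCont n δ f ∧ ∃ M : ℝ, AEContent n δ (fun x => |f x| ≤ M)

/-- The `BMO(ℝⁿ, ℋ^δ_∞)` seminorm. -/
def bmoNorm (n : ℕ) (δ : ℝ) (f : (Fin n → ℝ) → ℝ) : ℝ≥0∞ :=
  ⨆ Q : Cube n, ⨅ c : ℝ,
    integH n δ (fun x => |f x - c|) Q.toSet / hContent n δ Q.toSet

/-- Membership in `BMO(ℝⁿ, ℋ^δ_∞)`. -/
def MemBMO (n : ℕ) (δ : ℝ) (f : (Fin n → ℝ) → ℝ) : Prop :=
  MemL1loc n δ f ∧ bmoNorm n δ f < ⊤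

/-- `essinf_{x ∈ Q} f := inf {t ∈ (0,∞) : ℋ^δ_∞({x ∈ Q : f x < t}) > 0}`. -/
def essInfQ (n : ℕ) (δ : ℝ) (f : (Fin n → ℝ) → ℝ) (Q : Cube n) : ℝ :=
  sInf {t : ℝ | 0 < t ∧ 0 < hContent n δ {x | x ∈ Q.toSet ∧ f x < t}}

/-- The `BLO(ℝⁿ, ℋ^δ_∞)` seminorm. -/
def bloNorm (n : ℕ) (δ : ℝ) (f : (Fin n → ℝ) → ℝ) : ℝ≥0∞ :=
  ⨆ Q : Cube n,
    integH n δ (fun x => |f x - essInfQ n δ f Q|) Q.toSet / hContent n δ Q.toSet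

/-- Membership in `BLO(ℝⁿ, ℋ^δ_∞)`. -/
def MemBLO (n : ℕ) (δ : ℝ) (f : (Fin n → ℝ) → ℝ) : Prop :=
  MemL1loc n δ f ∧ bloNorm n δ f < ⊤

/-- A weight: locally Choquet-integrable, quasicontinuous, positive `ℋ^δ_∞`-a.e. -/
def IsWeight (n : ℕ) (δ : ℝ) (w : (Fin n → ℝ) → ℝ) : Prop :=
  MemL1loc n δ w ∧ AEContent n δ (fun x => 0 < w x)

/-- The capacitary Muckenhoupt `A_{p,δ}` constant, for `p > 1`. -/
def apConst (n : ℕ) (δ p : ℝ) (w : (Fin n → ℝ) → ℝ) : ℝ≥0∞ :=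
  ⨆ Q : Cube n,
    (integH n δ w Q.toSet / hContent n δ Q.toSet) *
      (integH n δ (fun x => w x ^ (-(1 / (p - 1)))) Q.toSet / hContent n δ Q.toSet) ^ (p - 1)

/-- Membership in `A_{p,δ}`, `p > 1`. -/
def MemAp (n : ℕ) (δ p : ℝ) (w : (Fin n → ℝ) → ℝ) : Prop :=
  IsWeight n δ w ∧ apConst n δ p w < ⊤

/-- The Hardy–Littlewood maximal operator w.r.t. `ℋ^δ_∞`. -/
def maxOp (n : ℕ) (δ : ℝ) (g : (Fin n → ℝ) → ℝ) (x : Fin n → ℝ) : ℝ≥0∞ :=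
  ⨆ (Q : Cube n) (_ : x ∈ Q.toSet),
    integH n δ (fun y => |g y|) Q.toSet / hContent n δ Q.toSet

/-- The capacitary `A_{1,δ}` constant. -/
def a1Const (n : ℕ) (δ : ℝ) (w : (Fin n → ℝ) → ℝ) : ℝ≥0∞ :=
  sInf {c : ℝ≥0∞ | 0 < c ∧
    AEContent n δ (fun x => maxOp n δ w x ≤ c * ENNReal.ofReal (w x))}

/-- Membership in `A_{1,δ}`. -/
def MemA1 (n : ℕ) (δ : ℝ) (w : (Fin n → ℝ) → ℝ) : Prop :=
  IsWeight n δ w ∧ a1Const n δ w < ⊤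

/-- The `A_{p,δ}` constant for `p ∈ [1,∞)` (it is the `A_{1,δ}` constant when `p = 1`). -/
def apConstGen (n : ℕ) (δ p : ℝ) (w : (Fin n → ℝ) → ℝ) : ℝ≥0∞ :=
  if p = 1 then a1Const n δ w else apConst n δ p w

/-- Membership in `A_{p,δ}` for `p ∈ [1,∞)` (meaning `A_{1,δ}` when `p = 1`). -/
def MemApGen (n : ℕ) (δ p : ℝ) (w : (Fin n → ℝ) → ℝ) : Prop :=
  IsWeight n δ w ∧ apConstGen n δ p w < ⊤

/-- The weighted `BMO^q_w(ℝⁿ, ℋ^δ_∞)` seminorm. -/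
def bmoWNorm (n : ℕ) (δ q : ℝ) (w f : (Fin n → ℝ) → ℝ) : ℝ≥0∞ :=
  ⨆ Q : Cube n, ⨅ c : ℝ,
    (integH n δ (fun x => |f x - c| ^ q * w x) Q.toSet / integH n δ w Q.toSet) ^ (1 / q)

/-- Membership in `BMO^q_w(ℝⁿ, ℋ^δ_∞)`. -/
def MemBMOw (n : ℕ) (δ q : ℝ) (w f : (Fin n → ℝ) → ℝ) : Prop :=
  QuasiCont n δ f ∧
    (∀ K : Set (Fin n → ℝ), IsCompact K → integH n δ (fun x => |f x| ^ q * w x) K < ⊤) ∧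
    bmoWNorm n δ q w f < ⊤

/-- The integral average `f_{Q,δ}` with respect to the dyadic Hausdorff content. -/
def avgQ (n : ℕ) (δ : ℝ) (f : (Fin n → ℝ) → ℝ) (Q : Cube n) : ℝ :=
  ((integD n δ f (Q.toSet ∩ {x | 0 ≤ f x})).toReal -
      (integD n δ (fun x => -f x) (Q.toSet ∩ {x | f x < 0})).toReal) /
    ((dContent n δ (Q.toSet ∩ {x | 0 ≤ f x})).toReal +
      (dContent n δ (Q.toSet ∩ {x | f x < 0})).toReal)


/-- Enlarge a cube by `r` on each side. -/
def Cube.grow {n : ℕ} (Q : Cube n) (r : ℝ) (hr : 0 ≤ r) : Cube n :=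
  ⟨fun i => Q.corner i - r, Q.side + 2 * r, by have := Q.side_pos; linarith⟩

/-- The weight of a cube. -/
def cw {n : ℕ} (δ : ℝ) (Q : Cube n) : ℝ≥0∞ := ENNReal.ofReal (Q.side ^ δ)

lemma cw_pos {n : ℕ} (δ : ℝ) (Q : Cube n) : 0 < cw δ Q :=
  ENNReal.ofReal_pos.2 (Real.rpow_pos_of_pos Q.side_pos _)

lemma cw_ne_top {n : ℕ} (δ : ℝ) (Q : Cube n) : cw δ Q ≠ ⊤ := ENNReal.ofReal_ne_top

lemma Cube.grow_side {n : ℕ} (Q : Cube n) (r : ℝ) (hr : 0 ≤ r) :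
    (Q.grow r hr).side = Q.side + 2 * r := rfl

lemma cw_grow {n : ℕ} (δ : ℝ) (Q : Cube n) (c : ℝ) (hc : 0 ≤ c) (h : 0 ≤ c * Q.side) :
    cw δ (Q.grow (c * Q.side) h) = ENNReal.ofReal ((1 + 2 * c) ^ δ) * cw δ Q := by
  unfold cw
  rw [← ENNReal.ofReal_mul (by positivity), ← Real.mul_rpow (by positivity) Q.side_pos.le,
    Cube.grow_side]
  congr 2; ring

lemma cw_mono {n : ℕ} {δ : ℝ} (hδ : 0 ≤ δ) {Q Q' : Cube n} (h : Q.side ≤ Q'.side) :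
    cw δ Q ≤ cw δ Q' :=
  ENNReal.ofReal_le_ofReal (Real.rpow_le_rpow Q.side_pos.le h hδ)

lemma hContent_le_tsum {n : ℕ} {δ : ℝ} {E : Set (Fin n → ℝ)} (Qs : ℕ → Cube n)
    (h : E ⊆ ⋃ i, (Qs i).toSet) : hContent n δ E ≤ ∑' i, cw δ (Qs i) :=
  iInf₂_le Qs h

lemma exists_cover {n : ℕ} {δ : ℝ} {E : Set (Fin n → ℝ)} {a : ℝ≥0∞} (h : hContent n δ E < a) :
    ∃ Qs : ℕ → Cube n, E ⊆ (⋃ i, (Qs i).toSet) ∧ ∑' i, cw δ (Qs i) < a := by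
  unfold hContent at h
  simp only [iInf_lt_iff] at h
  obtain ⟨Qs, h1, h2⟩ := h
  exact ⟨Qs, h1, h2⟩

lemma hContent_mono {n : ℕ} {δ : ℝ} {E F : Set (Fin n → ℝ)} (h : E ⊆ F) :
    hContent n δ E ≤ hContent n δ F :=
  le_iInf₂ fun Qs hQ => hContent_le_tsum Qs (h.trans hQ)

/-- A cube of prescribed weight. -/
lemma exists_cube_cw {n : ℕ} {δ : ℝ} (hδ : 0 < δ) (c : Fin n → ℝ) (e : ℝ) (he : 0 < e) :
    ∃ Q : Cube n, cw δ Q = ENNReal.ofReal e := by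
  refine ⟨⟨c, e ^ δ⁻¹, by positivity⟩, ?_⟩
  unfold cw
  rw [Real.rpow_inv_rpow he.le hδ.ne']

lemma hContent_empty {n : ℕ} {δ : ℝ} (hδ : 0 < δ) : hContent n δ ∅ = 0 := by
  refine le_antisymm (le_of_forall_gt fun a ha => ?_) bot_le
  obtain ⟨e, he, hs⟩ := ENNReal.exists_pos_sum_of_countable ha.ne' ℕ
  choose Q hQ using fun i : ℕ => exists_cube_cw (n := n) hδ 0 (e i : ℝ) (by exact_mod_cast he i)
  refine (hContent_le_tsum Q (empty_subset _)).trans_lt ?_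
  simpa [hQ] using hs

lemma hContent_iUnion_le {n : ℕ} {δ : ℝ} (s : ℕ → Set (Fin n → ℝ)) :
    hContent n δ (⋃ i, s i) ≤ ∑' i, hContent n δ (s i) := by
  by_cases htop : ∑' i, hContent n δ (s i) = ⊤
  · rw [htop]; exact le_top
  refine ENNReal.le_of_forall_pos_le_add fun ε hε _ => ?_
  obtain ⟨e, he, hs⟩ := ENNReal.exists_pos_sum_of_countable
    (ε := (ε : ℝ≥0∞)) (by exact_mod_cast hε.ne') ℕ
  have hfin : ∀ i, hContent n δ (s i) ≠ ⊤ := fun i => ENNReal.ne_top_of_tsum_ne_top htop i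
  have : ∀ i, ∃ Qs : ℕ → Cube n, s i ⊆ (⋃ j, (Qs j).toSet) ∧
      ∑' j, cw δ (Qs j) < hContent n δ (s i) + e i := fun i =>
    exists_cover (ENNReal.lt_add_right (hfin i) (by exact_mod_cast (he i).ne'))
  choose Qs h1 h2 using this
  let R : ℕ → Cube n := fun m => Qs (Nat.unpair m).1 (Nat.unpair m).2
  have hR : (⋃ i, s i) ⊆ ⋃ m, (R m).toSet := by
    intro x hx
    obtain ⟨i, hi⟩ := mem_iUnion.1 hx
    obtain ⟨j, hj⟩ := mem_iUnion.1 (h1 i hi)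
    refine mem_iUnion.2 ⟨Nat.pair i j, ?_⟩
    simpa [R] using hj
  have hsum : ∑' m, cw δ (R m) = ∑' i, ∑' j, cw δ (Qs i j) := by
    rw [← ENNReal.tsum_prod, ← Nat.pairEquiv.symm.tsum_eq]
    rfl
  calc hContent n δ (⋃ i, s i) ≤ ∑' m, cw δ (R m) := hContent_le_tsum R hR
    _ = ∑' i, ∑' j, cw δ (Qs i j) := hsum
    _ ≤ ∑' i, (hContent n δ (s i) + e i) := ENNReal.tsum_le_tsum fun i => (h2 i).le
    _ = ∑' i, hContent n δ (s i) + ∑' i, (e i : ℝ≥0∞) := ENNReal.tsum_add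
    _ ≤ _ := by gcongr

/-- Hausdorff content as an outer measure. -/
def hOM (n : ℕ) (δ : ℝ) (hδ : 0 < δ) : OuterMeasure (Fin n → ℝ) where
  measureOf := hContent n δ
  empty := hContent_empty hδ
  mono := fun h => hContent_mono h
  iUnion_nat := fun s _ => hContent_iUnion_le s

lemma hOM_apply {n : ℕ} {δ : ℝ} (hδ : 0 < δ) (E : Set (Fin n → ℝ)) :
    hOM n δ hδ E = hContent n δ E := rfl

lemma hContent_union_le {n : ℕ} {δ : ℝ} (hδ : 0 < δ) (E F : Set (Fin n → ℝ)) :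
    hContent n δ (E ∪ F) ≤ hContent n δ E + hContent n δ F :=
  measure_union_le (μ := hOM n δ hδ) E F

lemma hContent_countable_iUnion_le {n : ℕ} {δ : ℝ} (hδ : 0 < δ) {ι : Type*} [Countable ι]
    (s : ι → Set (Fin n → ℝ)) :
    hContent n δ (⋃ i, s i) ≤ ∑' i, hContent n δ (s i) :=
  measure_iUnion_le (μ := hOM n δ hδ) s

lemma hContent_cube_le {n : ℕ} {δ : ℝ} (hδ : 0 < δ) (Q : Cube n) :
    hContent n δ Q.toSet ≤ cw δ Q := by
  refine ENNReal.le_of_forall_pos_le_add fun ε hε _ => ?_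
  obtain ⟨e, he, hs⟩ := ENNReal.exists_pos_sum_of_countable
    (ε := (ε : ℝ≥0∞)) (by exact_mod_cast hε.ne') ℕ
  choose P hP using fun i : ℕ => exists_cube_cw (n := n) hδ 0 (e i : ℝ) (by exact_mod_cast he i)
  let R : ℕ → Cube n := fun i => Nat.casesOn i Q P
  refine (hContent_le_tsum R (fun x hx => mem_iUnion.2 ⟨0, hx⟩)).trans ?_
  rw [tsum_eq_zero_add' ENNReal.summable]
  refine add_le_add le_rfl ?_
  have : ∀ i, cw δ (R (i+1)) = e i := fun i => by simp [R, hP]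
  simp only [this]; exact hs.le

lemma volume_cube {n : ℕ} (Q : Cube n) : volume Q.toSet = ENNReal.ofReal (Q.side) ^ n := by
  have : Q.toSet = Set.pi univ fun i => Ico (Q.corner i) (Q.corner i + Q.side) := by
    ext x; simp [Cube.toSet]
  rw [this, volume_pi_pi]
  simp

lemma cw_le_hContent {n : ℕ} {δ : ℝ} (hδ : 0 < δ) (hδn : δ ≤ n) (Q : Cube n) :
    cw δ Q ≤ hContent n δ Q.toSet := by
  refine le_iInf₂ fun Qs hQ => ?_
  change cw δ Q ≤ ∑' i, cw δ (Qs i)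
  by_cases h : ∃ i, Q.side ≤ (Qs i).side
  · obtain ⟨i, hi⟩ := h
    exact (cw_mono hδ.le hi).trans (ENNReal.le_tsum i)
  push Not at h
  have hs := Q.side_pos
  have hvol : ENNReal.ofReal (Q.side) ^ n ≤ ∑' i, ENNReal.ofReal ((Qs i).side) ^ n := by
    rw [← volume_cube]
    refine (measure_mono hQ).trans ((measure_iUnion_le _).trans ?_)
    simp only [volume_cube]; exact le_rfl
  have key : ∀ i, ENNReal.ofReal ((Qs i).side) ^ n ≤
      ENNReal.ofReal (Q.side ^ ((n : ℝ) - δ)) * cw δ (Qs i) := fun i => by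
    have hi := (Qs i).side_pos
    unfold cw
    rw [← ENNReal.ofReal_pow hi.le, ← ENNReal.ofReal_mul (by positivity)]
    apply ENNReal.ofReal_le_ofReal
    calc (Qs i).side ^ n = (Qs i).side ^ ((n : ℝ) - δ) * (Qs i).side ^ δ := by
          rw [← Real.rpow_add hi, sub_add_cancel, Real.rpow_natCast]
      _ ≤ _ := by
          gcongr
          exact (h i).le
  have h2 : ENNReal.ofReal (Q.side) ^ n = ENNReal.ofReal (Q.side ^ ((n : ℝ) - δ)) * cw δ Q := by
    unfold cw
    rw [← ENNReal.ofReal_pow hs.le, ← ENNReal.ofReal_mul (by positivity), ← Real.rpow_add hs,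
      sub_add_cancel, Real.rpow_natCast]
  have h3 := hvol.trans (ENNReal.tsum_le_tsum key)
  rw [h2, ENNReal.tsum_mul_left] at h3
  refine (ENNReal.mul_le_mul_iff_right ?_ ENNReal.ofReal_ne_top).1 h3
  exact (ENNReal.ofReal_pos.2 (by positivity)).ne'

lemma hContent_cube {n : ℕ} {δ : ℝ} (hδ : 0 < δ) (hδn : δ ≤ n) (Q : Cube n) :
    hContent n δ Q.toSet = cw δ Q :=
  le_antisymm (hContent_cube_le hδ Q) (cw_le_hContent hδ hδn Q)

lemma subset_grow_of_near {n : ℕ} (Q : Cube n) {r : ℝ} (hr : 0 ≤ r) {x y : Fin n → ℝ}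
    (hx : x ∈ Q.toSet) (h : ∀ i, |y i - x i| < r) : y ∈ (Q.grow r hr).toSet := by
  intro i
  have h1 := hx i
  have h2 := abs_lt.1 (h i)
  simp only [Cube.grow]
  constructor <;> linarith

lemma subset_grow {n : ℕ} (Q : Cube n) {r : ℝ} (hr : 0 ≤ r) : Q.toSet ⊆ (Q.grow r hr).toSet := by
  intro x hx i
  have h1 := hx i
  simp only [Cube.grow]
  constructor <;> linarith

lemma cube_dist {n : ℕ} (Q : Cube n) {x y : Fin n → ℝ}
    (hx : x ∈ Q.toSet) (hy : y ∈ Q.toSet) (i : Fin n) : |y i - x i| < Q.side := by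
  have h1 := hx i
  have h2 := hy i
  rw [abs_lt]; constructor <;> linarith

/-- If `Q` and `P` meet and `ℓ(P) ≤ ℓ(Q)`, then `P ⊆ 3Q`. -/
lemma subset_three {n : ℕ} (Q P : Cube n) (h : P.side ≤ Q.side)
    (hm : (P.toSet ∩ Q.toSet).Nonempty) : P.toSet ⊆ (Q.grow Q.side Q.side_pos.le).toSet := by
  obtain ⟨x, hxP, hxQ⟩ := hm
  intro y hy
  exact subset_grow_of_near Q _ hxQ fun i => (cube_dist P hxP hy i).trans_le h

lemma cw_three {n : ℕ} (δ : ℝ) (Q : Cube n) :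
    cw δ (Q.grow Q.side Q.side_pos.le) = ENNReal.ofReal (3 ^ δ) * cw δ Q := by
  have := cw_grow δ Q 1 (by norm_num) (by simpa using Q.side_pos.le)
  simp only [one_mul] at this
  rw [this]; norm_num

/-- outer regularity up to a constant -/
lemma exists_open_superset {n : ℕ} {δ : ℝ} {E : Set (Fin n → ℝ)} {a : ℝ≥0∞}
    (h : hContent n δ E < a) :
    ∃ O, IsOpen O ∧ E ⊆ O ∧ hContent n δ O ≤ ENNReal.ofReal (3 ^ δ) * a := by
  obtain ⟨Qs, h1, h2⟩ := exists_cover h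
  refine ⟨⋃ i, interior ((Qs i).grow (Qs i).side (Qs i).side_pos.le).toSet,
    isOpen_iUnion fun i => isOpen_interior, h1.trans (iUnion_mono fun i => ?_), ?_⟩
  · refine fun x hx => mem_interior_iff_mem_nhds.2 ?_
    refine Filter.mem_of_superset (Metric.ball_mem_nhds x (Qs i).side_pos) fun y hy => ?_
    refine subset_grow_of_near _ _ hx fun j => ?_
    rw [← Real.dist_eq]
    exact (dist_le_pi_dist y x j).trans_lt hy
  · refine (hContent_le_tsum _ (iUnion_mono fun i => interior_subset)).trans ?_
    simp only [cw_three]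
    rw [ENNReal.tsum_mul_left]
    gcongr

lemma dist_antitone {n : ℕ} {δ : ℝ} (u : (Fin n → ℝ) → ℝ) (A : Set (Fin n → ℝ)) :
    Antitone fun t : ℝ => hContent n δ {x | x ∈ A ∧ t < u x} :=
  fun _ _ h => hContent_mono fun _ hx => ⟨hx.1, h.trans_lt hx.2⟩

lemma dist_measurable {n : ℕ} {δ : ℝ} (u : (Fin n → ℝ) → ℝ) (A : Set (Fin n → ℝ)) :
    Measurable fun t : ℝ => hContent n δ {x | x ∈ A ∧ t < u x} :=
  (dist_antitone u A).measurable

lemma integH_mono {n : ℕ} {δ : ℝ} {u v : (Fin n → ℝ) → ℝ} {A B : Set (Fin n → ℝ)}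
    (hAB : A ⊆ B) (h : ∀ x ∈ A, u x ≤ v x) : integH n δ u A ≤ integH n δ v B :=
  lintegral_mono fun _ => hContent_mono fun _ hx => ⟨hAB hx.1, hx.2.trans_le (h _ hx.1)⟩

lemma antitone_Ioc_le {F : ℝ → ℝ≥0∞} (hF : Antitone F) (a b : ℝ) :
    ∫⁻ t in Ioc a b, F t ≤ ENNReal.ofReal (b - a) * F a := by
  calc ∫⁻ t in Ioc a b, F t ≤ ∫⁻ t in Ioc a b, F a :=
        setLIntegral_mono measurable_const fun t ht => hF ht.1.le
    _ = _ := by rw [setLIntegral_const, Real.volume_Ioc, mul_comm]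

lemma antitone_Ioc_ge {F : ℝ → ℝ≥0∞} (hF : Antitone F) (a b : ℝ) :
    ENNReal.ofReal (b - a) * F b ≤ ∫⁻ t in Ioc a b, F t := by
  calc _ = ∫⁻ t in Ioc a b, F b := by rw [setLIntegral_const, Real.volume_Ioc, mul_comm]
    _ ≤ ∫⁻ t in Ioc a b, F t :=
        setLIntegral_mono hF.measurable fun t ht => hF ht.2

lemma exists_pow_between {s t : ℝ} (hs : 0 < s) (h : s < t) :
    ∃ k : ℕ, s * 2 ^ k < t ∧ t ≤ s * 2 ^ (k + 1) := by
  have hex : ∃ k : ℕ, t ≤ s * 2 ^ (k + 1) := by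
    obtain ⟨k, hk⟩ := pow_unbounded_of_one_lt (t / s) (one_lt_two)
    refine ⟨k, ?_⟩
    rw [div_lt_iff₀ hs] at hk
    have : (0:ℝ) < 2 ^ k := by positivity
    rw [pow_succ]; nlinarith
  classical
  refine ⟨Nat.find hex, ?_, Nat.find_spec hex⟩
  rcases Nat.eq_zero_or_pos (Nat.find hex) with h0 | h0
  · rw [h0]; simpa using h
  · have := Nat.find_min hex (Nat.sub_lt h0 one_pos)
    have h3 : Nat.find hex - 1 + 1 = Nat.find hex := Nat.sub_add_cancel h0
    rw [h3] at this
    exact not_le.1 this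

lemma antitone_layer_upper {F : ℝ → ℝ≥0∞} (hF : Antitone F) {s : ℝ} (hs : 0 < s) :
    ∫⁻ t in Ioi (0:ℝ), F t ≤
      ENNReal.ofReal s * F 0 + ∑' k : ℕ, ENNReal.ofReal (s * 2 ^ k) * F (s * 2 ^ k) := by
  have hsub : Ioi (0:ℝ) ⊆ Ioc 0 s ∪ ⋃ k : ℕ, Ioc (s * 2 ^ k) (s * 2 ^ (k + 1)) := by
    intro t ht
    rcases le_or_gt t s with h | h
    · exact Or.inl ⟨ht, h⟩
    · obtain ⟨k, hk⟩ := exists_pow_between hs h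
      exact Or.inr (mem_iUnion.2 ⟨k, hk⟩)
  refine (lintegral_mono_set hsub).trans ((lintegral_union_le _ _ _).trans ?_)
  refine add_le_add ?_ ((lintegral_iUnion_le _ _).trans (ENNReal.tsum_le_tsum fun k => ?_))
  · simpa using antitone_Ioc_le hF 0 s
  · convert antitone_Ioc_le hF (s * 2 ^ k) (s * 2 ^ (k + 1)) using 3
    ring

lemma antitone_layer_lower {F : ℝ → ℝ≥0∞} (hF : Antitone F) {s : ℝ} (hs : 0 < s) :
    ∑' k : ℕ, ENNReal.ofReal (s * 2 ^ k) * F (s * 2 ^ k) ≤ 2 * ∫⁻ t in Ioi (0:ℝ), F t := by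
  have hd : Pairwise (Function.onFun Disjoint fun k : ℕ => Ioc (s * 2 ^ k / 2) (s * 2 ^ k)) := by
    rw [pairwise_disjoint_on]
    intro i j hij
    rw [Set.disjoint_left]
    intro x hx hx'
    have h1 : s * 2 ^ i ≤ s * 2 ^ j / 2 := by
      have : (2:ℝ) ^ (i+1) ≤ 2 ^ j := pow_le_pow_right₀ one_le_two hij
      rw [pow_succ] at this
      nlinarith
    have := hx.2; have := hx'.1
    linarith
  have hsub : (⋃ k : ℕ, Ioc (s * 2 ^ k / 2) (s * 2 ^ k)) ⊆ Ioi (0:ℝ) := by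
    refine iUnion_subset fun k x hx => ?_
    have : 0 < s * 2 ^ k / 2 := by positivity
    exact this.trans hx.1
  calc _ ≤ ∑' k : ℕ, 2 * ∫⁻ t in Ioc (s * 2 ^ k / 2) (s * 2 ^ k), F t := by
        refine ENNReal.tsum_le_tsum fun k => ?_
        have := antitone_Ioc_ge hF (s * 2 ^ k / 2) (s * 2 ^ k)
        refine le_trans (le_of_eq ?_) (mul_le_mul_right this 2)
        rw [← mul_assoc]
        congr 1
        rw [← ENNReal.ofReal_ofNat, ← ENNReal.ofReal_mul (by norm_num)]
        congr 1; ring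
    _ = 2 * ∫⁻ t in ⋃ k : ℕ, Ioc (s * 2 ^ k / 2) (s * 2 ^ k), F t := by
        rw [ENNReal.tsum_mul_left, lintegral_iUnion (fun k => measurableSet_Ioc) hd]
    _ ≤ _ := by gcongr

/-- Rescaled set integrals over `(0,∞)`. -/
lemma lintegral_Ioi_scale (F : ℝ → ℝ≥0∞) (hF : Measurable F) {a : ℝ} (ha : 0 < a) :
    ∫⁻ t in Ioi (0:ℝ), F (a * t) = ENNReal.ofReal a⁻¹ * ∫⁻ t in Ioi (0:ℝ), F t := by
  have h1 : (fun t : ℝ => F t) = F := rfl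
  have hm : Measure.map (fun t : ℝ => a * t) volume = ENNReal.ofReal |a⁻¹| • volume :=
    Real.map_volume_mul_left ha.ne'
  have h2 : (∫⁻ t in Ioi (0:ℝ), F t ∂(Measure.map (fun t : ℝ => a * t) volume)) =
      ∫⁻ t in (fun t : ℝ => a * t) ⁻¹' Ioi (0:ℝ), F (a * t) :=
    setLIntegral_map measurableSet_Ioi hF (by fun_prop)
  have h3 : (fun t : ℝ => a * t) ⁻¹' Ioi (0:ℝ) = Ioi 0 := by
    ext t; simp [ha]
  rw [h3, hm] at h2
  rw [← h2, Measure.restrict_smul, lintegral_smul_measure, abs_of_pos (by positivity)]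
  rfl

/-- Weighted quasi-subadditivity of the Choquet integral. -/
lemma integH_split {n : ℕ} {δ : ℝ} (hδ : 0 < δ) {u v w : (Fin n → ℝ) → ℝ}
    {A : Set (Fin n → ℝ)} {θ₁ θ₂ : ℝ} (h1 : 0 < θ₁) (h2 : 0 < θ₂)
    (h : ∀ x ∈ A, ∀ t : ℝ, 0 < t → t < u x → θ₁ * t < v x ∨ θ₂ * t < w x) :
    integH n δ u A ≤ ENNReal.ofReal θ₁⁻¹ * integH n δ v A +
      ENNReal.ofReal θ₂⁻¹ * integH n δ w A := by
  unfold integH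
  have hm : Measurable fun t : ℝ => hContent n δ {x | x ∈ A ∧ θ₁ * t < v x} :=
    (dist_measurable v A).comp (measurable_const_mul θ₁)
  rw [← lintegral_Ioi_scale _ (dist_measurable v A) h1,
    ← lintegral_Ioi_scale _ (dist_measurable w A) h2, ← lintegral_add_left hm]
  refine setLIntegral_mono' measurableSet_Ioi fun t ht => ?_
  refine le_trans (hContent_mono ?_) (hContent_union_le hδ _ _)
  rintro x ⟨hx, htx⟩
  rcases h x hx t ht htx with h | h
  · exact Or.inl ⟨hx, h⟩
  · exact Or.inr ⟨hx, h⟩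

lemma integH_add_le {n : ℕ} {δ : ℝ} (hδ : 0 < δ) {u v w : (Fin n → ℝ) → ℝ}
    {A : Set (Fin n → ℝ)} (h : ∀ x ∈ A, u x ≤ v x + w x) :
    integH n δ u A ≤ 2 * integH n δ v A + 2 * integH n δ w A := by
  have := integH_split hδ (u := u) (v := v) (w := w) (A := A) (θ₁ := 1/2) (θ₂ := 1/2)
    (by norm_num) (by norm_num) (fun x hx t ht htx => by
      by_contra hc
      push Not at hc
      linarith [h x hx, hc.1, hc.2])
  simpa using this

lemma integH_const_mul {n : ℕ} {δ : ℝ} {u : (Fin n → ℝ) → ℝ}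
    {A : Set (Fin n → ℝ)} {a : ℝ} (ha : 0 < a) :
    integH n δ (fun x => a * u x) A = ENNReal.ofReal a * integH n δ u A := by
  unfold integH
  have := lintegral_Ioi_scale _ (dist_measurable (δ := δ) u A) (a := a⁻¹) (by positivity)
  rw [inv_inv] at this
  rw [← this]
  congr 1; funext t; congr 1; ext x
  simp only [mem_ofPred_eq, and_congr_right_iff]
  intro _
  rw [inv_mul_lt_iff₀ ha]

/-- integral of an a.e. bounded function -/
lemma integH_le_of_bdd {n : ℕ} {δ : ℝ} {u : (Fin n → ℝ) → ℝ}
    {A : Set (Fin n → ℝ)} {M : ℝ} (hM : 0 ≤ M) (h : hContent n δ {x | x ∈ A ∧ M < u x} = 0) :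
    integH n δ u A ≤ ENNReal.ofReal M * hContent n δ A := by
  unfold integH
  rw [← Ioc_union_Ioi_eq_Ioi hM]
  refine (lintegral_union_le _ _ _).trans ?_
  have h1 : ∫⁻ t in Ioi M, hContent n δ {x | x ∈ A ∧ t < u x} = 0 := by
    rw [← nonpos_iff_eq_zero]
    calc _ ≤ ∫⁻ t in Ioi M, 0 := setLIntegral_mono' measurableSet_Ioi fun t ht => by
          rw [← h]
          exact dist_antitone u A (le_of_lt ht)
      _ = 0 := by simp
  rw [h1, add_zero]
  refine (antitone_Ioc_le (dist_antitone u A) 0 M).trans ?_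
  rw [sub_zero]
  gcongr
  exact hContent_mono fun x hx => hx.1

lemma integH_ge_of_le {n : ℕ} {δ : ℝ} {u : (Fin n → ℝ) → ℝ}
    {A : Set (Fin n → ℝ)} {m : ℝ} (h : ∀ x ∈ A, m < u x) :
    ENNReal.ofReal m * hContent n δ A ≤ integH n δ u A := by
  unfold integH
  calc _ ≤ ∫⁻ t in Ioc 0 m, hContent n δ {x | x ∈ A ∧ t < u x} := by
        refine le_trans ?_ (antitone_Ioc_ge (dist_antitone u A) 0 m)
        rw [sub_zero]
        gcongr
        exact hContent_mono fun x hx => ⟨hx, h x hx⟩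
    _ ≤ _ := lintegral_mono_set fun t ht => ht.1

/-- The weak type constant. -/
def wC (δ : ℝ) : ℝ≥0∞ := (ENNReal.ofReal (3 ^ δ) * 4 + ENNReal.ofReal (13 ^ δ) * 2) * 3

lemma wC_ne_top (δ : ℝ) : wC δ ≠ ⊤ := by
  unfold wC; finiteness

/-- The centre of a cube. -/
def Cube.ctr {n : ℕ} (Q : Cube n) : Fin n → ℝ := fun i => Q.corner i + Q.side / 2

lemma three_subset_closedBall {n : ℕ} (Q : Cube n) :
    (Q.grow Q.side Q.side_pos.le).toSet ⊆ Metric.closedBall Q.ctr (3 / 2 * Q.side) := by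
  intro x hx
  have hs := Q.side_pos
  rw [Metric.mem_closedBall, dist_pi_le_iff (by positivity)]
  intro i
  have := hx i
  simp only [Cube.grow] at this
  rw [Real.dist_eq, abs_le]
  simp only [Cube.ctr]
  constructor <;> linarith

lemma closedBall_subset_grow {n : ℕ} (Q : Cube n) (h : 0 ≤ 6 * Q.side) :
    Metric.closedBall Q.ctr (4 * (3 / 2 * Q.side)) ⊆ (Q.grow (6 * Q.side) h).toSet := by
  intro x hx i
  have hs := Q.side_pos
  rw [Metric.mem_closedBall, dist_pi_le_iff (by positivity)] at hx
  have := hx i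
  rw [Real.dist_eq, abs_le] at this
  simp only [Cube.ctr] at this
  simp only [Cube.grow]
  constructor <;> linarith

lemma cube_nonempty {n : ℕ} (Q : Cube n) : Q.toSet.Nonempty :=
  ⟨Q.corner, fun i => ⟨le_rfl, by linarith [Q.side_pos]⟩⟩

lemma tsum_ite_le_of_unique {ι : Type*} (c : ι → Prop) [DecidablePred c] (a : ℝ≥0∞)
    (h : ∀ i j, c i → c j → i = j) : ∑' i, (if c i then a else 0) ≤ a := by
  by_cases hex : ∃ i, c i
  · obtain ⟨i, hi⟩ := hex
    rw [tsum_eq_single i]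
    · simp [hi]
    · intro j hj
      rw [if_neg]
      exact fun hcj => hj (h j i hcj hi)
  · push Not at hex
    simp [hex]

open Classical in
/-- Part 2 of the weak type bound: cubes that dominate all covering cubes they meet. -/
lemma weak_type_part2 {n : ℕ} {δ : ℝ} (hδ : 0 < δ) {t : ℝ}
    (P : ℕ × ℕ → Cube n) (a : ℕ × ℕ → ℝ≥0∞) (𝒬 : Set (Cube n)) (R : ℝ)
    (hR : ∀ Q ∈ 𝒬, Q.side ≤ R)
    (hQ : ∀ Q ∈ 𝒬, ENNReal.ofReal t * cw δ Q ≤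
      2 * ∑' p, if (P p).toSet ⊆ (Q.grow Q.side Q.side_pos.le).toSet then a p else 0) :
    hContent n δ (⋃ Q ∈ 𝒬, Q.toSet) * ENNReal.ofReal t ≤
      ENNReal.ofReal (13 ^ δ) * 2 * ∑' p, a p := by
  obtain ⟨U, hU, hdisj, hcov⟩ := Vitali.exists_disjoint_subfamily_covering_enlargement_closedBall
    𝒬 (fun Q => Q.ctr) (fun Q => 3 / 2 * Q.side) (3 / 2 * R)
    (fun Q hQ => by have := hR Q hQ; linarith) 4 (by norm_num)
  have hcount : U.Countable := hdisj.countable_of_nonempty_interior fun Q _ => by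
    have hs := Q.side_pos
    refine ⟨Q.ctr, Metric.ball_subset_interior_closedBall (Metric.mem_ball_self (by positivity))⟩
  have : Countable U := hcount.to_subtype
  have hsub : (⋃ Q ∈ 𝒬, Q.toSet) ⊆ ⋃ Q : U, ((Q : Cube n).grow (6 * (Q : Cube n).side)
      (by have := (Q : Cube n).side_pos; positivity)).toSet := by
    intro x hx
    simp only [mem_iUnion] at hx
    obtain ⟨Q, hQ, hxQ⟩ := hx
    obtain ⟨b, hb, hsub⟩ := hcov Q hQ
    refine mem_iUnion.2 ⟨⟨b, hb⟩, closedBall_subset_grow _ _ (hsub ?_)⟩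
    exact three_subset_closedBall Q (subset_grow Q _ hxQ)
  have hcw : ∀ Q : Cube n, ∀ h, cw δ (Q.grow (6 * Q.side) h) =
      ENNReal.ofReal (13 ^ δ) * cw δ Q := fun Q h => by
    rw [cw_grow δ Q 6 (by norm_num) h]; norm_num
  have hsum : ∑' Q : U, ENNReal.ofReal t * cw δ (Q : Cube n) ≤ 2 * ∑' p, a p := by
    calc _ ≤ ∑' Q : U, 2 * ∑' p, (if (P p).toSet ⊆ ((Q : Cube n).grow (Q : Cube n).side
            (Q : Cube n).side_pos.le).toSet then a p else 0) :=
          ENNReal.tsum_le_tsum fun Q => hQ Q (hU Q.2)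
      _ = 2 * ∑' p, ∑' Q : U, (if (P p).toSet ⊆ ((Q : Cube n).grow (Q : Cube n).side
            (Q : Cube n).side_pos.le).toSet then a p else 0) := by
          rw [ENNReal.tsum_mul_left, ENNReal.tsum_comm]
      _ ≤ _ := by
          gcongr with p
          refine tsum_ite_le_of_unique _ _ fun Q Q' h1 h2 => ?_
          by_contra hne
          obtain ⟨x, hx⟩ := cube_nonempty (P p)
          have := hdisj Q.2 Q'.2 (fun h => hne (Subtype.ext h))
          exact Set.disjoint_left.1 this (three_subset_closedBall _ (h1 hx))
            (three_subset_closedBall _ (h2 hx))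
  calc _ ≤ (∑' Q : U, ENNReal.ofReal (13 ^ δ) * cw δ (Q : Cube n)) * ENNReal.ofReal t := by
        gcongr
        refine (hContent_mono hsub).trans ((hContent_countable_iUnion_le hδ _).trans ?_)
        refine ENNReal.tsum_le_tsum fun Q => ?_
        rw [← hcw]
        exact hContent_cube_le hδ _
    _ = ENNReal.ofReal (13 ^ δ) * ∑' Q : U, ENNReal.ofReal t * cw δ (Q : Cube n) := by
        rw [ENNReal.tsum_mul_left, ENNReal.tsum_mul_left]; ring
    _ ≤ _ := by rw [mul_assoc]; gcongr

open Classical in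
lemma weak_type {n : ℕ} {δ : ℝ} (hδ : 0 < δ) {t : ℝ} (ht : 0 < t)
    (u : (Fin n → ℝ) → ℝ) (A E : Set (Fin n → ℝ)) (hI : integH n δ u A ≠ ⊤)
    (hE : ∀ x ∈ E, ∃ Q : Cube n, x ∈ Q.toSet ∧ Q.toSet ⊆ A ∧
      ENNReal.ofReal t * cw δ Q < integH n δ u Q.toSet) :
    hContent n δ E * ENNReal.ofReal t ≤ wC δ * integH n δ u A := by
  set I := integH n δ u A with hIdef
  by_cases hI0 : I = 0
  · have : E = ∅ := by
      refine eq_empty_of_forall_notMem fun x hx => ?_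
      obtain ⟨Q, _, hQA, hQ⟩ := hE x hx
      have := hQ.trans_le (integH_mono hQA fun _ _ => le_rfl)
      rw [← hIdef, hI0] at this
      exact not_lt_bot this
    rw [this, hContent_empty hδ]; simp
  obtain ⟨e, he, hes⟩ := ENNReal.exists_pos_sum_of_countable hI0 ℕ
  have hs : 0 < t / 4 := by positivity
  set sk : ℕ → ℝ := fun k => t / 4 * 2 ^ k with hsk
  have hskpos : ∀ k, 0 < sk k := fun k => by simp only [hsk]; positivity
  have hskne : ∀ k, ENNReal.ofReal (sk k) ≠ 0 := fun k => (ENNReal.ofReal_pos.2 (hskpos k)).ne'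
  set H : ℕ → ℝ≥0∞ := fun k => hContent n δ {x | x ∈ A ∧ sk k < u x} with hH
  have hS : ∑' k, ENNReal.ofReal (sk k) * H k ≤ 2 * I :=
    antitone_layer_lower (dist_antitone u A) hs
  have hStop : ∑' k, ENNReal.ofReal (sk k) * H k ≠ ⊤ :=
    ne_top_of_le_ne_top (by finiteness) hS
  have hHtop : ∀ k, H k ≠ ⊤ := fun k hk => by
    have := ENNReal.ne_top_of_tsum_ne_top hStop k
    rw [hk, ENNReal.mul_top (hskne k)] at this
    exact this rfl
  have hcov : ∀ k, ∃ Qs : ℕ → Cube n, {x | x ∈ A ∧ sk k < u x} ⊆ (⋃ j, (Qs j).toSet) ∧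
      ∑' j, cw δ (Qs j) < H k + e k / ENNReal.ofReal (sk k) := fun k =>
    exists_cover (ENNReal.lt_add_right (hHtop k)
      (ENNReal.div_pos (by exact_mod_cast (he k).ne') ENNReal.ofReal_ne_top).ne')
  choose P hP1 hP2 using hcov
  set a : ℕ × ℕ → ℝ≥0∞ := fun p => ENNReal.ofReal (sk p.1) * cw δ (P p.1 p.2) with ha
  have haS : ∑' p, a p ≤ 3 * I := by
    rw [ENNReal.tsum_prod']
    calc _ ≤ ∑' k, (ENNReal.ofReal (sk k) * H k + e k) := by
          refine ENNReal.tsum_le_tsum fun k => ?_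
          simp only [ha]
          rw [ENNReal.tsum_mul_left]
          refine (mul_le_mul_right (hP2 k).le _).trans ?_
          rw [mul_add, ENNReal.mul_div_cancel (hskne k) ENNReal.ofReal_ne_top]
      _ = ∑' k, ENNReal.ofReal (sk k) * H k + ∑' k, (e k : ℝ≥0∞) := ENNReal.tsum_add
      _ ≤ 2 * I + I := add_le_add hS hes.le
      _ = 3 * I := by ring
  -- the two parts
  set E₁ : Set (Fin n → ℝ) :=
    ⋃ p : ℕ × ℕ, ((P p.1 p.2).grow (P p.1 p.2).side (P p.1 p.2).side_pos.le).toSet with hE₁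
  set 𝒬 : Set (Cube n) := {Q | Q.toSet ⊆ A ∧ ENNReal.ofReal t * cw δ Q < integH n δ u Q.toSet ∧
    ∀ p : ℕ × ℕ, ((P p.1 p.2).toSet ∩ Q.toSet).Nonempty → (P p.1 p.2).side ≤ Q.side} with h𝒬
  have hEsub : E ⊆ E₁ ∪ ⋃ Q ∈ 𝒬, Q.toSet := by
    intro x hx
    obtain ⟨Q, hxQ, hQA, hQ⟩ := hE x hx
    by_cases hc : ∀ p : ℕ × ℕ, ((P p.1 p.2).toSet ∩ Q.toSet).Nonempty → (P p.1 p.2).side ≤ Q.side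
    · right
      simp only [mem_iUnion]
      exact ⟨Q, ⟨hQA, hQ, hc⟩, hxQ⟩
    · left
      push Not at hc
      obtain ⟨p, hp, hlt⟩ := hc
      refine mem_iUnion.2 ⟨p, subset_three _ Q hlt.le ?_ hxQ⟩
      rwa [inter_comm]
  have h1 : hContent n δ E₁ * ENNReal.ofReal t ≤ ENNReal.ofReal (3 ^ δ) * 4 * ∑' p, a p := by
    calc _ ≤ (∑' p : ℕ × ℕ, ENNReal.ofReal (3 ^ δ) * cw δ (P p.1 p.2)) * ENNReal.ofReal t := by
          gcongr
          refine (hContent_countable_iUnion_le hδ _).trans (ENNReal.tsum_le_tsum fun p => ?_)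
          rw [← cw_three]
          exact hContent_cube_le hδ _
      _ = ENNReal.ofReal (3 ^ δ) * ∑' p : ℕ × ℕ, ENNReal.ofReal t * cw δ (P p.1 p.2) := by
          rw [ENNReal.tsum_mul_left, ENNReal.tsum_mul_left]; ring
      _ ≤ ENNReal.ofReal (3 ^ δ) * ∑' p : ℕ × ℕ, 4 * a p := by
          refine mul_le_mul_right (ENNReal.tsum_le_tsum fun p => ?_) _
          simp only [ha]
          rw [← mul_assoc]
          gcongr
          rw [← ENNReal.ofReal_ofNat, ← ENNReal.ofReal_mul (by norm_num)]
          apply ENNReal.ofReal_le_ofReal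
          simp only [hsk]
          have : (1:ℝ) ≤ 2 ^ p.1 := one_le_pow₀ (by norm_num)
          nlinarith
      _ = _ := by rw [ENNReal.tsum_mul_left, mul_assoc]
  have h2 : hContent n δ (⋃ Q ∈ 𝒬, Q.toSet) * ENNReal.ofReal t ≤
      ENNReal.ofReal (13 ^ δ) * 2 * ∑' p, a p := by
    refine weak_type_part2 hδ (fun p => P p.1 p.2) a 𝒬 ((I.toReal / t) ^ δ⁻¹) ?_ ?_
    · rintro Q ⟨hQA, hQ, -⟩
      have h3 : ENNReal.ofReal (t * Q.side ^ δ) ≤ I := by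
        rw [ENNReal.ofReal_mul ht.le]
        exact hQ.le.trans (integH_mono hQA fun _ _ => le_rfl)
      have h4 := (ENNReal.ofReal_le_iff_le_toReal hI).1 h3
      have h5 : Q.side ^ δ ≤ I.toReal / t := by
        rw [le_div_iff₀ ht]; linarith
      have hsp := Q.side_pos
      calc Q.side = (Q.side ^ δ) ^ δ⁻¹ := (Real.rpow_rpow_inv hsp.le hδ.ne').symm
        _ ≤ _ := by gcongr
    · rintro Q ⟨hQA, hQ, hQP⟩
      have hlev : ∀ k, hContent n δ {x | x ∈ Q.toSet ∧ sk k < u x} ≤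
          ∑' j, if (P k j).toSet ⊆ (Q.grow Q.side Q.side_pos.le).toSet
            then cw δ (P k j) else 0 := fun k => by
        have hsub : {x | x ∈ Q.toSet ∧ sk k < u x} ⊆ ⋃ j,
            (if (P k j).toSet ⊆ (Q.grow Q.side Q.side_pos.le).toSet
              then (P k j).toSet else ∅) := by
          rintro x ⟨hxQ, hxu⟩
          obtain ⟨j, hj⟩ := mem_iUnion.1 (hP1 k ⟨hQA hxQ, hxu⟩)
          refine mem_iUnion.2 ⟨j, ?_⟩
          have := subset_three Q (P k j) (hQP (k, j) ⟨x, hj, hxQ⟩) ⟨x, hj, hxQ⟩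
          rwa [if_pos this]
        refine (hContent_mono hsub).trans ((hContent_iUnion_le _).trans ?_)
        refine ENNReal.tsum_le_tsum fun j => ?_
        split_ifs
        · exact hContent_cube_le hδ _
        · exact (hContent_empty hδ).le
      set Y := ∑' p, if (P p.1 p.2).toSet ⊆ (Q.grow Q.side Q.side_pos.le).toSet
        then a p else 0 with hY
      have h3 : integH n δ u Q.toSet ≤ ENNReal.ofReal (t / 4) * cw δ Q + Y := by
        refine (antitone_layer_upper (dist_antitone u Q.toSet) hs).trans ?_
        refine add_le_add ?_ ?_
        · gcongr
          exact (hContent_mono fun x hx => hx.1).trans (hContent_cube_le hδ Q)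
        · rw [hY, ENNReal.tsum_prod']
          refine ENNReal.tsum_le_tsum fun k => ?_
          refine (mul_le_mul_right (hlev k) _).trans ?_
          rw [← ENNReal.tsum_mul_left]
          refine ENNReal.tsum_le_tsum fun j => ?_
          split_ifs <;> simp [ha, hsk]
      have h4 : ENNReal.ofReal (3 * t / 4) * cw δ Q ≤ Y := by
        have h5 : ENNReal.ofReal (t / 4) * cw δ Q + ENNReal.ofReal (3 * t / 4) * cw δ Q ≤
            ENNReal.ofReal (t / 4) * cw δ Q + Y := by
          refine le_trans (le_of_eq ?_) (hQ.le.trans h3)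
          rw [← add_mul, ← ENNReal.ofReal_add (by positivity) (by positivity)]
          congr 2; ring
        have hfin : ENNReal.ofReal (t / 4) * cw δ Q ≠ ⊤ :=
          ENNReal.mul_ne_top ENNReal.ofReal_ne_top (cw_ne_top _ _)
        exact (ENNReal.add_le_add_iff_left hfin).1 h5
      refine le_trans ?_ (mul_le_mul_right h4 2)
      rw [← mul_assoc]
      gcongr
      rw [← ENNReal.ofReal_ofNat, ← ENNReal.ofReal_mul (by norm_num)]
      apply ENNReal.ofReal_le_ofReal
      linarith
  calc _ ≤ (hContent n δ E₁ + hContent n δ (⋃ Q ∈ 𝒬, Q.toSet)) * ENNReal.ofReal t := by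
        gcongr
        exact (hContent_mono hEsub).trans (hContent_union_le hδ _ _)
    _ ≤ ENNReal.ofReal (3 ^ δ) * 4 * ∑' p, a p + ENNReal.ofReal (13 ^ δ) * 2 * ∑' p, a p := by
        rw [add_mul]; exact add_le_add h1 h2
    _ = (ENNReal.ofReal (3 ^ δ) * 4 + ENNReal.ofReal (13 ^ δ) * 2) * ∑' p, a p := by ring
    _ ≤ (ENNReal.ofReal (3 ^ δ) * 4 + ENNReal.ofReal (13 ^ δ) * 2) * (3 * I) := by gcongr
    _ = _ := by unfold wC; ring

lemma integH_le_maxOp {n : ℕ} {δ : ℝ} (hδ : 0 < δ) (hδn : δ ≤ n) (g : (Fin n → ℝ) → ℝ)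
    {x : Fin n → ℝ} {Q : Cube n} (hx : x ∈ Q.toSet) :
    integH n δ (fun y => |g y|) Q.toSet ≤ maxOp n δ g x * cw δ Q := by
  have h : integH n δ (fun y => |g y|) Q.toSet / hContent n δ Q.toSet ≤ maxOp n δ g x :=
    le_iSup₂ (f := fun (Q : Cube n) (_ : x ∈ Q.toSet) =>
      integH n δ (fun y => |g y|) Q.toSet / hContent n δ Q.toSet) Q hx
  rw [hContent_cube hδ hδn] at h
  exact (ENNReal.div_le_iff (cw_pos δ Q).ne' (cw_ne_top δ Q)).1 h

lemma exists_cube_of_lt_maxOp {n : ℕ} {δ : ℝ} (hδ : 0 < δ) (hδn : δ ≤ n)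
    {g : (Fin n → ℝ) → ℝ} {x : Fin n → ℝ} {c : ℝ≥0∞} (h : c < maxOp n δ g x) :
    ∃ Q : Cube n, x ∈ Q.toSet ∧ c * cw δ Q < integH n δ (fun y => |g y|) Q.toSet := by
  unfold maxOp at h
  simp only [lt_iSup_iff] at h
  obtain ⟨Q, hx, h⟩ := h
  rw [hContent_cube hδ hδn] at h
  exact ⟨Q, hx, (ENNReal.lt_div_iff_mul_lt (Or.inl (cw_pos δ Q).ne')
    (Or.inl (cw_ne_top δ Q))).1 h⟩

lemma exists_grow_mem {n : ℕ} (Q : Cube n) (x : Fin n → ℝ) :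
    ∃ (r : ℝ) (hr : 0 ≤ r), x ∈ (Q.grow r hr).toSet := by
  refine ⟨dist x Q.corner + 1, by positivity, ?_⟩
  refine subset_grow_of_near Q _ (x := Q.corner)
    (fun i => ⟨le_rfl, by linarith [Q.side_pos]⟩) fun i => ?_
  have := dist_le_pi_dist x Q.corner i
  rw [Real.dist_eq] at this
  linarith

lemma maxOp_zero_of {n : ℕ} {δ : ℝ} (hδ : 0 < δ) (hδn : δ ≤ n)
    {g : (Fin n → ℝ) → ℝ} {x : Fin n → ℝ} (h : maxOp n δ g x = 0) (y : Fin n → ℝ) :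
    maxOp n δ g y = 0 := by
  by_contra hy
  obtain ⟨Q, -, hQ⟩ := exists_cube_of_lt_maxOp hδ hδn (pos_iff_ne_zero.2 hy)
  obtain ⟨r, hr, hx⟩ := exists_grow_mem Q x
  have h1 := integH_le_maxOp hδ hδn g hx
  have h2 := integH_mono (δ := δ) (subset_grow Q hr) (u := fun y => |g y|) (v := fun y => |g y|)
    fun _ _ => le_rfl
  rw [h, zero_mul] at h1
  exact absurd (hQ.trans_le (h2.trans h1)) (by simp)

lemma lintegral_exp_neg_Ioi_zero :
    ∫⁻ t in Ioi (0:ℝ), ENNReal.ofReal (Real.exp (-t)) = 1 := by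
  rw [← ofReal_integral_eq_lintegral_ofReal (integrableOn_exp_neg_Ioi 0)
    (Filter.Eventually.of_forall fun t => (Real.exp_pos _).le), integral_exp_neg_Ioi_zero]
  simp

/-- The BMO constant. -/
def bC (δ : ℝ) : ℝ≥0∞ := ENNReal.ofReal (δ * Real.log 3) + wC δ * ENNReal.ofReal (3 ^ δ)

lemma bC_ne_top (δ : ℝ) : bC δ ≠ ⊤ := by
  unfold bC
  have := wC_ne_top δ
  finiteness

lemma bmo_log {n : ℕ} {δ : ℝ} (hδ : 0 < δ) (hδn : δ ≤ n) (g : (Fin n → ℝ) → ℝ)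
    (hM : AEContent n δ (fun x => maxOp n δ g x < ⊤)) (Q : Cube n) :
    ∃ c : ℝ, integH n δ (fun x => |Real.log (maxOp n δ g x).toReal - c|) Q.toSet ≤
      bC δ * cw δ Q := by
  by_cases hpos : ∀ x, maxOp n δ g x ≠ 0
  swap
  · push Not at hpos
    obtain ⟨x, hx⟩ := hpos
    refine ⟨0, ?_⟩
    have h0 : ∀ y, |Real.log (maxOp n δ g y).toReal - 0| = 0 := fun y => by
      simp [maxOp_zero_of hδ hδn hx y]
    have := integH_le_of_bdd (n := n) (δ := δ) (A := Q.toSet) (M := 0)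
      (u := fun x => |Real.log (maxOp n δ g x).toReal - 0|) le_rfl (by
        simp only [h0]; simpa using hContent_empty hδ)
    refine this.trans ?_
    simp
  set J : Cube n → ℝ≥0∞ := fun Q => integH n δ (fun y => |g y|) Q.toSet with hJ
  set m : ℝ≥0∞ := ⨅ y ∈ Q.toSet, maxOp n δ g y with hm
  have hmle : ∀ y ∈ Q.toSet, m ≤ maxOp n δ g y := fun y hy => iInf₂_le y hy
  have hJmono : ∀ Q₁ Q₂ : Cube n, Q₁.toSet ⊆ Q₂.toSet → J Q₁ ≤ J Q₂ := fun Q₁ Q₂ h =>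
    integH_mono h fun _ _ => le_rfl
  have hJm : ∀ Q' : Cube n, Q.toSet ⊆ Q'.toSet → J Q' ≤ m * cw δ Q' := fun Q' h => by
    rw [← ENNReal.div_le_iff (cw_pos δ Q').ne' (cw_ne_top δ Q')]
    refine le_iInf₂ fun y hy => ?_
    rw [ENNReal.div_le_iff (cw_pos δ Q').ne' (cw_ne_top δ Q')]
    exact integH_le_maxOp hδ hδn g (h hy)
  have hm0 : m ≠ 0 := by
    intro h0
    apply hpos Q.corner
    by_contra hne
    obtain ⟨Q', hx, hQ'⟩ := exists_cube_of_lt_maxOp hδ hδn (pos_iff_ne_zero.2 hne)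
    have hsub : Q.toSet ⊆ (Q'.grow Q.side Q.side_pos.le).toSet := fun y hy =>
      subset_grow_of_near Q' _ hx fun i => cube_dist Q
        (fun i => ⟨le_rfl, by linarith [Q.side_pos]⟩) hy i
    have h1 := hJm _ hsub
    rw [h0, zero_mul] at h1
    exact absurd (hQ'.trans_le ((hJmono _ _ (subset_grow Q' _)).trans h1)) (by simp)
  have hmtop : m ≠ ⊤ := by
    intro htop
    have hsub : Q.toSet ⊆ {x | ¬ maxOp n δ g x < ⊤} := fun y hy => by
      have := hmle y hy
      rw [htop] at this
      exact not_lt.2 this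
    have := hContent_mono (δ := δ) hsub
    rw [hContent_cube hδ hδn, show hContent n δ _ = 0 from hM] at this
    exact (cw_pos δ Q).not_ge this
  set mr := m.toReal with hmr
  have hmrpos : 0 < mr := ENNReal.toReal_pos hm0 hmtop
  have hmof : ENNReal.ofReal mr = m := ENNReal.ofReal_toReal hmtop
  refine ⟨Real.log mr, ?_⟩
  have hlog3 : 0 < Real.log 3 := Real.log_pos (by norm_num)
  have hs0 : 0 ≤ δ * Real.log 3 := by positivity
  have htail : ∀ s ∈ Ioi (δ * Real.log 3),
      hContent n δ {x | x ∈ Q.toSet ∧ s < |Real.log (maxOp n δ g x).toReal - Real.log mr|} ≤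
        wC δ * ENNReal.ofReal (3 ^ δ) * cw δ Q * ENNReal.ofReal (Real.exp (-s)) := by
    intro s hs
    rw [mem_Ioi] at hs
    have hes : (3:ℝ) ^ δ ≤ Real.exp s := by
      rw [Real.rpow_def_of_pos (by norm_num), mul_comm]
      exact Real.exp_le_exp.2 hs.le
    set E : Set (Fin n → ℝ) := {x | x ∈ Q.toSet ∧ maxOp n δ g x < ⊤ ∧
      s < |Real.log (maxOp n δ g x).toReal - Real.log mr|} with hE
    have hsub : {x | x ∈ Q.toSet ∧ s < |Real.log (maxOp n δ g x).toReal - Real.log mr|} ⊆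
        {x | ¬ maxOp n δ g x < ⊤} ∪ E := fun x hx => by
      by_cases h : maxOp n δ g x < ⊤
      · exact Or.inr ⟨hx.1, h, hx.2⟩
      · exact Or.inl h
    have hle : hContent n δ
        {x | x ∈ Q.toSet ∧ s < |Real.log (maxOp n δ g x).toReal - Real.log mr|} ≤
        hContent n δ E := by
      refine (hContent_mono hsub).trans ((hContent_union_le hδ _ _).trans ?_)
      rw [show hContent n δ {x | ¬ maxOp n δ g x < ⊤} = 0 from hM, zero_add]
    refine hle.trans ?_
    have htpos : 0 < mr * Real.exp s := by positivity
    have h3 := hJm (Q.grow Q.side Q.side_pos.le) (subset_grow Q _)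
    rw [cw_three] at h3
    have hweak := weak_type hδ htpos (fun y => |g y|) (Q.grow Q.side Q.side_pos.le).toSet E
      (ne_top_of_le_ne_top (by have := cw_ne_top δ Q; finiteness) h3) (by
        rintro x ⟨hxQ, hxt, hxs⟩
        have hmx : mr ≤ (maxOp n δ g x).toReal :=
          (ENNReal.toReal_le_toReal hmtop hxt.ne).2 (hmle x hxQ)
        have hlog : Real.log mr ≤ Real.log (maxOp n δ g x).toReal := Real.log_le_log hmrpos hmx
        rw [abs_of_nonneg (by linarith)] at hxs
        have hlt : mr * Real.exp s < (maxOp n δ g x).toReal := by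
          have h5 : Real.log (mr * Real.exp s) < Real.log (maxOp n δ g x).toReal := by
            rw [Real.log_mul hmrpos.ne' (Real.exp_pos s).ne', Real.log_exp]; linarith
          exact (Real.log_lt_log_iff htpos (hmrpos.trans_le hmx)).1 h5
        obtain ⟨Q', hxQ', hQ'⟩ := exists_cube_of_lt_maxOp hδ hδn
          ((ENNReal.ofReal_lt_iff_lt_toReal htpos.le hxt.ne).2 hlt)
        refine ⟨Q', hxQ', ?_, hQ'⟩
        rcases le_or_gt Q'.side Q.side with hc | hc
        · exact subset_three Q Q' hc ⟨x, hxQ', hxQ⟩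
        · exfalso
          have h6 := hJm _ (subset_three Q' Q hc.le ⟨x, hxQ, hxQ'⟩)
          rw [cw_three] at h6
          have h7 := (hJmono _ _ (subset_grow Q' Q'.side_pos.le)).trans h6
          refine absurd (hQ'.trans_le h7) (not_lt.2 ?_)
          rw [← hmof, ← mul_assoc, ← ENNReal.ofReal_mul hmrpos.le]
          gcongr)
    have h8 : hContent n δ E * ENNReal.ofReal (mr * Real.exp s) ≤
        wC δ * (m * (ENNReal.ofReal (3 ^ δ) * cw δ Q)) :=
      hweak.trans (mul_le_mul_right h3 _)
    rw [ENNReal.ofReal_mul hmrpos.le, hmof] at h8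
    have h9 : m * (hContent n δ E * ENNReal.ofReal (Real.exp s)) ≤
        m * (wC δ * ENNReal.ofReal (3 ^ δ) * cw δ Q) := by
      calc _ = hContent n δ E * (m * ENNReal.ofReal (Real.exp s)) := by ring
        _ ≤ _ := h8
        _ = _ := by ring
    have h10 := (ENNReal.mul_le_mul_iff_right hm0 hmtop).1 h9
    have h11 : ENNReal.ofReal (Real.exp s) * ENNReal.ofReal (Real.exp (-s)) = 1 := by
      rw [← ENNReal.ofReal_mul (Real.exp_pos s).le, ← Real.exp_add]; simp
    calc hContent n δ E = hContent n δ E * ENNReal.ofReal (Real.exp s) *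
          ENNReal.ofReal (Real.exp (-s)) := by rw [mul_assoc, h11, mul_one]
      _ ≤ _ := by gcongr
  unfold integH
  rw [← Ioc_union_Ioi_eq_Ioi hs0]
  refine (lintegral_union_le _ _ _).trans ?_
  rw [bC, add_mul]
  refine add_le_add ?_ ?_
  · refine (antitone_Ioc_le (dist_antitone _ _) 0 _).trans ?_
    rw [sub_zero]
    gcongr
    exact (hContent_mono fun x hx => hx.1).trans (hContent_cube_le hδ Q)
  · calc _ ≤ ∫⁻ s in Ioi (δ * Real.log 3),
          wC δ * ENNReal.ofReal (3 ^ δ) * cw δ Q * ENNReal.ofReal (Real.exp (-s)) :=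
        setLIntegral_mono' measurableSet_Ioi htail
      _ ≤ ∫⁻ s in Ioi (0:ℝ),
          wC δ * ENNReal.ofReal (3 ^ δ) * cw δ Q * ENNReal.ofReal (Real.exp (-s)) :=
        lintegral_mono_set (Ioi_subset_Ioi hs0)
      _ = _ := by
        rw [lintegral_const_mul _ (by fun_prop), lintegral_exp_neg_Ioi_zero, mul_one]

lemma exists_tail_small {F : ℝ → ℝ≥0∞} (hfin : ∫⁻ t in Ioi (0:ℝ), F t ≠ ⊤)
    {κ : ℝ≥0∞} (hκ : 0 < κ) : ∃ T : ℝ, 0 < T ∧ ∫⁻ t in Ioi T, F t < κ := by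
  set ν := (volume : Measure ℝ).withDensity F with hν
  have hν0 : ∀ T : ℝ, ν (Ioi T) = ∫⁻ t in Ioi T, F t := fun T =>
    withDensity_apply _ measurableSet_Ioi
  have htend := tendsto_measure_iInter_atTop (μ := ν) (s := fun k : ℕ => Ioi (k : ℝ))
    (fun k => measurableSet_Ioi.nullMeasurableSet)
    (fun i j hij => Ioi_subset_Ioi (by exact_mod_cast hij))
    ⟨0, by simpa [hν0] using hfin⟩
  have hempty : (⋂ k : ℕ, Ioi (k : ℝ)) = ∅ := by
    refine eq_empty_of_forall_notMem fun x hx => ?_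
    obtain ⟨k, hk⟩ := exists_nat_gt x
    have := mem_iInter.1 hx k
    exact lt_asymm hk this
  rw [hempty, measure_empty] at htend
  obtain ⟨k, hk⟩ := ((htend.eventually (gt_mem_nhds hκ)).and
    (Filter.eventually_gt_atTop 0)).exists
  refine ⟨k, by exact_mod_cast hk.2, ?_⟩
  rw [← hν0]; exact hk.1

lemma exists_cont_approx {n : ℕ} {δ : ℝ} (hδ : 0 < δ) {g : (Fin n → ℝ) → ℝ}
    (hg : MemL1loc n δ g) {A : Set (Fin n → ℝ)} (hA : IsCompact A) {κ : ℝ≥0∞} (hκ : 0 < κ) :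
    ∃ φ : (Fin n → ℝ) → ℝ, Continuous φ ∧ (∀ x, 0 ≤ φ x) ∧
      integH n δ (fun x => |(|g x|) - φ x|) A ≤ κ := by
  wlog hκt : κ ≠ ⊤ generalizing κ
  · obtain ⟨φ, h1, h2, h3⟩ := this (κ := 1) one_pos ENNReal.one_ne_top
    exact ⟨φ, h1, h2, by push Not at hκt; rw [hκt]; exact le_top⟩
  set F : ℝ → ℝ≥0∞ := fun t => hContent n δ {x | x ∈ A ∧ t < |g x|} with hF
  have hκ3 : 0 < κ / 3 := ENNReal.div_pos hκ.ne' (by norm_num)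
  obtain ⟨T, hT, hTκ⟩ := exists_tail_small (F := F) (hg.2 A hA).ne hκ3
  have hε : 0 < (κ / 3).toReal / T :=
    div_pos (ENNReal.toReal_pos hκ3.ne' (ENNReal.div_ne_top hκt (by norm_num))) hT
  obtain ⟨O, hO, hOε, hcont⟩ := hg.1 _ hε
  have hTO : ENNReal.ofReal T * hContent n δ O ≤ κ / 3 := by
    refine (mul_le_mul_right hOε.le _).trans ?_
    rw [← ENNReal.ofReal_mul hT.le, mul_div_cancel₀ _ hT.ne', ENNReal.ofReal_toReal
      (ENNReal.div_ne_top hκt (by norm_num))]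
  obtain ⟨φ, hφ, hφeq⟩ := ContinuousMap.exists_extension_forall_mem_of_isClosedEmbedding
    (X := ↥(Oᶜ)) (Y := Fin n → ℝ) (t := Icc 0 T) (e := Subtype.val)
    ⟨fun x => min |g x| T, by
      have : Continuous (Oᶜ.domRestrict g) := continuousOn_iff_continuous_domRestrict.1 hcont
      exact (this.abs).min continuous_const⟩
    (fun x => ⟨le_min (abs_nonneg _) hT.le, min_le_right _ _⟩) ⟨0, le_rfl, hT.le⟩
    hO.isClosed_compl.isClosedEmbedding_subtypeVal
  have hφ' : ∀ x, x ∉ O → φ x = min |g x| T := fun x hx => congrFun hφeq ⟨x, hx⟩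
  refine ⟨φ, φ.continuous, fun x => (hφ x).1, ?_⟩
  set D : ℝ → ℝ≥0∞ := fun t => hContent n δ {x | x ∈ A ∧ t < |(|g x|) - φ x|} with hD
  have hDanti : Antitone D := dist_antitone _ _
  have key : ∀ t, 0 < t → D t ≤ F (T + t) + hContent n δ {x | x ∈ O ∧ x ∈ A ∧
      t < |(|g x|) - φ x|} := fun t ht => by
    refine le_trans (hContent_mono ?_) (hContent_union_le hδ _ _)
    rintro x ⟨hxA, hx⟩
    by_cases hxO : x ∈ O
    · exact Or.inr ⟨hxO, hxA, hx⟩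
    · left
      refine ⟨hxA, ?_⟩
      rw [hφ' x hxO] at hx
      rcases le_total |g x| T with h | h
      · rw [min_eq_left h, sub_self, abs_zero] at hx; linarith
      · rw [min_eq_right h, abs_of_nonneg (by linarith)] at hx; linarith
  have hFm : Measurable F := (dist_antitone _ _).measurable
  have hshift : ∫⁻ t in Ioi (0:ℝ), F (T + t) = ∫⁻ t in Ioi T, F t := by
    have := (measurePreserving_add_left (volume : Measure ℝ) T).setLIntegral_comp_preimage
      (s := Ioi T) measurableSet_Ioi hFm
    rw [← this]
    congr 2
    ext t; simp
  have hsecond : ∫⁻ t in Ioi (0:ℝ), hContent n δ {x | x ∈ O ∧ x ∈ A ∧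
      t < |(|g x|) - φ x|} ≤ κ / 3 + κ / 3 := by
    rw [← Ioc_union_Ioi_eq_Ioi hT.le]
    refine (lintegral_union_le _ _ _).trans (add_le_add ?_ ?_)
    · refine le_trans ?_ hTO
      calc _ ≤ ∫⁻ t in Ioc 0 T, hContent n δ O :=
            setLIntegral_mono measurable_const fun t _ => hContent_mono fun x hx => hx.1
        _ = _ := by rw [setLIntegral_const, Real.volume_Ioc, mul_comm, sub_zero]
    · refine le_trans ?_ hTκ.le
      refine setLIntegral_mono hFm fun t ht => hContent_mono ?_
      rintro x ⟨-, hxA, hx⟩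
      refine ⟨hxA, ?_⟩
      have h1 := hφ x
      rw [mem_Ioi] at ht
      rcases lt_abs.1 hx with h | h
      · linarith [h1.1]
      · linarith [h1.2, abs_nonneg (g x)]
  have hm2 : Measurable fun t : ℝ => F (T + t) := hFm.comp (measurable_const_add T)
  calc integH n δ (fun x => |(|g x|) - φ x|) A
      ≤ ∫⁻ t in Ioi (0:ℝ), (F (T + t) + hContent n δ {x | x ∈ O ∧ x ∈ A ∧
          t < |(|g x|) - φ x|}) := setLIntegral_mono' measurableSet_Ioi key
    _ = (∫⁻ t in Ioi (0:ℝ), F (T + t)) + ∫⁻ t in Ioi (0:ℝ), hContent n δ {x | x ∈ O ∧ x ∈ A ∧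
          t < |(|g x|) - φ x|} := lintegral_add_left hm2 _
    _ ≤ κ / 3 + (κ / 3 + κ / 3) := add_le_add (hshift.le.trans hTκ.le) hsecond
    _ = κ := by rw [← add_assoc, ENNReal.add_thirds]

lemma exists_small_open {n : ℕ} {δ : ℝ} {ε : ℝ} (hε : 0 < ε) :
    ∃ a : ℝ, 0 < a ∧ ∀ E : Set (Fin n → ℝ), hContent n δ E < ENNReal.ofReal a →
      ∃ O, IsOpen O ∧ E ⊆ O ∧ hContent n δ O < ENNReal.ofReal ε := by
  have h3 : (0:ℝ) < 3 ^ δ := by positivity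
  refine ⟨ε / (2 * 3 ^ δ), by positivity, fun E hE => ?_⟩
  obtain ⟨O, h1, h2, h4⟩ := exists_open_superset hE
  refine ⟨O, h1, h2, h4.trans_lt ?_⟩
  rw [← ENNReal.ofReal_mul h3.le]
  refine (ENNReal.ofReal_lt_ofReal_iff hε).2 ?_
  have : 3 ^ δ * (ε / (2 * 3 ^ δ)) = ε / 2 := by field_simp
  rw [this]; linarith

lemma quasi_avg {n : ℕ} {δ : ℝ} (hδ : 0 < δ) {v w d : (Fin n → ℝ) → ℝ} {Q : Cube n} {θ b : ℝ}
    (hθ : 0 < θ) (hθ1 : θ < 1) (hb : 0 ≤ b) (hv : ∀ x, v x ≤ d x + w x)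
    (h1 : integH n δ d Q.toSet ≤ ENNReal.ofReal (θ ^ 2) * cw δ Q)
    (h2 : integH n δ w Q.toSet ≤ ENNReal.ofReal b * cw δ Q) :
    integH n δ v Q.toSet ≤ ENNReal.ofReal (θ + (1 - θ)⁻¹ * b) * cw δ Q := by
  have h1θ : 0 < 1 - θ := by linarith
  refine (integH_split hδ hθ h1θ (v := d) (w := w) fun x _ t ht hx => ?_).trans ?_
  · by_contra hc
    push Not at hc
    linarith [hv x, hc.1, hc.2]
  · calc _ ≤ ENNReal.ofReal θ⁻¹ * (ENNReal.ofReal (θ ^ 2) * cw δ Q) +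
          ENNReal.ofReal (1 - θ)⁻¹ * (ENNReal.ofReal b * cw δ Q) := by gcongr
      _ = _ := by
        rw [← mul_assoc, ← mul_assoc, ← add_mul, ← ENNReal.ofReal_mul (by positivity),
          ← ENNReal.ofReal_mul (by positivity), ← ENNReal.ofReal_add (by positivity)
          (by positivity)]
        congr 3
        field_simp

/-- Moving a cube of side at least `ρ`. -/
lemma grow_bound {n : ℕ} {δ : ℝ} (hδ : 0 < δ) (hδn : δ ≤ n) (g : (Fin n → ℝ) → ℝ)
    {x y : Fin n → ℝ} {Q : Cube n} (hy : y ∈ Q.toSet) {ρ r L : ℝ} (hρ : 0 < ρ) (hr : 0 < r)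
    (hL : (1 + 2 * r / ρ) ^ δ ≤ L) (hQ : ρ ≤ Q.side) (hxy : dist x y < r) :
    integH n δ (fun y => |g y|) Q.toSet ≤ maxOp n δ g x * (ENNReal.ofReal L * cw δ Q) := by
  have hx : x ∈ (Q.grow r hr.le).toSet := subset_grow_of_near Q hr.le hy fun i => by
    rw [← Real.dist_eq]; exact (dist_le_pi_dist x y i).trans_lt hxy
  refine (integH_mono (subset_grow Q hr.le) fun _ _ => le_rfl).trans
    ((integH_le_maxOp hδ hδn g hx).trans ?_)
  gcongr
  have hs := Q.side_pos
  have hLpos : 0 ≤ L := le_trans (by positivity) hL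
  unfold cw
  rw [← ENNReal.ofReal_mul hLpos, Cube.grow_side]
  apply ENNReal.ofReal_le_ofReal
  calc (Q.side + 2 * r) ^ δ ≤ ((1 + 2 * r / ρ) * Q.side) ^ δ := by
        gcongr
        have : 2 * r ≤ 2 * r / ρ * Q.side := by
          rw [div_mul_eq_mul_div, le_div_iff₀ hρ]; nlinarith
        linarith
    _ = (1 + 2 * r / ρ) ^ δ * Q.side ^ δ := Real.mul_rpow (by positivity) hs.le
    _ ≤ _ := by gcongr

lemma exists_r {δ ρ η : ℝ} (hδ : 0 < δ) (hρ : 0 < ρ) (hη : 0 < η) :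
    ∃ r, 0 < r ∧ r ≤ ρ ∧ (1 + 2 * r / ρ) ^ δ ≤ 1 + η := by
  have h1 : 1 < (1 + η) ^ δ⁻¹ := Real.one_lt_rpow (by linarith) (by positivity)
  set B := (1 + η) ^ δ⁻¹ with hB
  refine ⟨min ρ (ρ / 2 * (B - 1)), lt_min hρ (by have : 0 < B - 1 := by linarith
                                                 positivity), min_le_left _ _, ?_⟩
  have h2 : 1 + 2 * min ρ (ρ / 2 * (B - 1)) / ρ ≤ B := by
    have := min_le_right ρ (ρ / 2 * (B - 1))
    have h3 : 2 * min ρ (ρ / 2 * (B - 1)) / ρ ≤ B - 1 := by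
      rw [div_le_iff₀ hρ]; linarith
    linarith
  have h0 : 0 ≤ min ρ (ρ / 2 * (B - 1)) := le_min hρ.le (by
    have : 0 < B - 1 := by linarith
    positivity)
  calc _ ≤ B ^ δ := by gcongr
    _ = 1 + η := by rw [hB, Real.rpow_inv_rpow (by linarith) hδ.ne']

lemma local_usc {n : ℕ} {δ : ℝ} (hδ : 0 < δ) (hδn : δ ≤ n) {g : (Fin n → ℝ) → ℝ}
    (hg : MemL1loc n δ g) (N : ℕ) {η : ℝ} (hη : 0 < η) (hη1 : η ≤ 1) {ε : ℝ} (hε : 0 < ε) :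
    ∃ O : Set (Fin n → ℝ), IsOpen O ∧ hContent n δ O < ENNReal.ofReal ε ∧
      ∀ x, x ∉ O → ‖x‖ < N → maxOp n δ g x ≠ ⊤ →
        ∀ᶠ y in nhds x, y ∉ O →
          maxOp n δ g y ≤ ENNReal.ofReal ((1 + η) * (maxOp n δ g x).toReal + η) := by
  obtain ⟨a, ha, hopen⟩ := exists_small_open (n := n) (δ := δ) hε
  set θ : ℝ := η / 10 with hθdef
  have hθ : 0 < θ := by positivity
  have hθ1 : θ < 1 := by rw [hθdef]; linarith
  set A : Set (Fin n → ℝ) := Metric.closedBall 0 (N + 1) with hA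
  have hθ2 : 0 < θ ^ 2 := by positivity
  obtain ⟨κ, hκ, hκlt⟩ := ENNReal.exists_nnreal_pos_mul_lt (wC_ne_top δ)
    (b := ENNReal.ofReal a * ENNReal.ofReal (θ ^ 2))
    (mul_ne_zero (ENNReal.ofReal_pos.2 ha).ne' (ENNReal.ofReal_pos.2 hθ2).ne')
  obtain ⟨φ, hφc, hφ0, hφI⟩ := exists_cont_approx hδ hg (A := A) (isCompact_closedBall _ _)
    (κ := (κ : ℝ≥0∞)) (by exact_mod_cast hκ)
  set u : (Fin n → ℝ) → ℝ := fun x => |(|g x|) - φ x| with hu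
  set E : Set (Fin n → ℝ) := {y | ∃ Q : Cube n, y ∈ Q.toSet ∧ Q.toSet ⊆ A ∧
    ENNReal.ofReal (θ ^ 2) * cw δ Q < integH n δ u Q.toSet} with hE
  have hEsmall : hContent n δ E < ENNReal.ofReal a := by
    have h1 := weak_type hδ hθ2 u A E (ne_top_of_le_ne_top ENNReal.coe_ne_top hφI)
      (fun x hx => hx)
    have h2 : hContent n δ E * ENNReal.ofReal (θ ^ 2) <
        ENNReal.ofReal a * ENNReal.ofReal (θ ^ 2) := by
      refine h1.trans_lt (lt_of_le_of_lt ?_ hκlt)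
      rw [mul_comm]
      gcongr
    exact lt_of_mul_lt_mul_right h2 bot_le
  obtain ⟨O, hO, hEO, hOε⟩ := hopen E hEsmall
  refine ⟨O, hO, hOε, fun x hxO hxN hxtop => ?_⟩
  have hgood : ∀ y, y ∉ O → ∀ Q : Cube n, y ∈ Q.toSet → Q.toSet ⊆ A →
      integH n δ u Q.toSet ≤ ENNReal.ofReal (θ ^ 2) * cw δ Q := fun y hy Q hyQ hQA => by
    by_contra hc
    exact hy (hEO ⟨Q, hyQ, hQA, not_le.1 hc⟩)
  obtain ⟨ρ', hρ', hφx⟩ := Metric.continuous_iff.1 hφc x θ hθ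
  set ρ : ℝ := min (ρ' / 2) (1 / 2) with hρdef
  have hρ : 0 < ρ := lt_min (by positivity) (by norm_num)
  have hρ1 : 2 * ρ ≤ ρ' := by have := min_le_left (ρ' / 2) (1 / 2 : ℝ); linarith
  have hρ2 : 2 * ρ ≤ 1 := by have := min_le_right (ρ' / 2) (1 / 2 : ℝ); linarith
  have hnearA : ∀ z, dist z x < 2 * ρ → z ∈ A := fun z hz => by
    rw [hA, Metric.mem_closedBall, dist_zero_right]
    have h1 : ‖z‖ ≤ ‖x‖ + dist z x := by
      rw [dist_eq_norm]; have := norm_add_le x (z - x); simpa using this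
    linarith
  have hnearφ : ∀ z, dist z x < 2 * ρ → |φ z - φ x| < θ := fun z hz => by
    rw [← Real.dist_eq]; exact hφx z (hz.trans_le hρ1)
  set M := (maxOp n δ g x).toReal with hMdef
  have hM0 : 0 ≤ M := ENNReal.toReal_nonneg
  have hMof : ENNReal.ofReal M = maxOp n δ g x := ENNReal.ofReal_toReal hxtop
  have h1θ : 0 < 1 - θ := by linarith
  -- the bound on `φ x`
  have hφle : φ x ≤ 2 * θ + (1 - θ)⁻¹ * M := by
    set Q₀ : Cube n := ⟨x, ρ, hρ⟩ with hQ₀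
    have hxQ : x ∈ Q₀.toSet := fun i => ⟨le_rfl, by simp only [hQ₀]; linarith⟩
    have hnear : ∀ z ∈ Q₀.toSet, dist z x < 2 * ρ := fun z hz => by
      rw [dist_pi_lt_iff (by positivity)]
      intro i
      rw [Real.dist_eq]
      have := cube_dist Q₀ hxQ hz i
      simp only [hQ₀] at this
      linarith
    have h1 := hgood x hxO Q₀ hxQ fun z hz => hnearA z (hnear z hz)
    have h2 := integH_le_maxOp hδ hδn g hxQ
    rw [← hMof] at h2
    have h3 := quasi_avg hδ (v := φ) (w := fun y => |g y|) (d := u) hθ hθ1 hM0 (fun z => by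
      have := neg_abs_le (|g z| - φ z)
      simp only [hu]; linarith) h1 h2
    have h4 := integH_ge_of_le (n := n) (δ := δ) (u := φ) (A := Q₀.toSet) (m := φ x - θ)
      fun z hz => by have := (abs_lt.1 (hnearφ z (hnear z hz))).1; linarith
    rw [hContent_cube hδ hδn] at h4
    have h5 := (ENNReal.mul_le_mul_iff_left (cw_pos δ Q₀).ne' (cw_ne_top δ Q₀)).1 (h4.trans h3)
    have h6 := (ENNReal.ofReal_le_ofReal_iff (by positivity)).1 h5
    linarith
  obtain ⟨r, hr, hrρ, hrL⟩ := exists_r hδ hρ hη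
  filter_upwards [Metric.ball_mem_nhds x hr] with y hy hyO
  rw [Metric.mem_ball] at hy
  by_contra hc
  obtain ⟨Q, hyQ, hQ⟩ := exists_cube_of_lt_maxOp hδ hδn (not_le.1 hc)
  rcases le_or_gt ρ Q.side with hs | hs
  · have h1 := grow_bound hδ hδn g hyQ hρ hr hrL hs (by rwa [dist_comm])
    rw [← hMof, ← mul_assoc, ← ENNReal.ofReal_mul hM0] at h1
    refine absurd (hQ.trans_le h1) (not_lt.2 ?_)
    gcongr
    linarith
  · have hnear : ∀ z ∈ Q.toSet, dist z x < 2 * ρ := fun z hz => by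
      have h1 : dist z y < ρ := by
        rw [dist_pi_lt_iff hρ]
        intro i
        rw [Real.dist_eq]
        exact (cube_dist Q hyQ hz i).trans hs
      have := dist_triangle z y x
      linarith
    have h1 := hgood y hyO Q hyQ fun z hz => hnearA z (hnear z hz)
    have hb : 0 ≤ φ x + θ := by have := hφ0 x; linarith
    have h2 : integH n δ φ Q.toSet ≤ ENNReal.ofReal (φ x + θ) * cw δ Q := by
      rw [← hContent_cube hδ hδn]
      refine integH_le_of_bdd hb ?_
      convert hContent_empty (n := n) hδ
      refine eq_empty_of_forall_notMem fun z hz => ?_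
      have := (abs_lt.1 (hnearφ z (hnear z hz.1))).2
      linarith [hz.2]
    have h3 := quasi_avg hδ (v := fun y => |g y|) (w := φ) (d := u) hθ hθ1 hb (fun z => by
      have := le_abs_self (|g z| - φ z)
      simp only [hu]; linarith) h1 h2
    refine absurd (hQ.trans_le h3) (not_lt.2 ?_)
    refine mul_le_mul_left (ENNReal.ofReal_le_ofReal ?_) _
    have hinv : (1 - θ)⁻¹ ≤ 10 / 9 := by
      rw [inv_le_comm₀ h1θ (by norm_num)]; rw [hθdef]; linarith
    have hinv0 : 0 < (1 - θ)⁻¹ := by positivity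
    have hinv2 : (1 - θ)⁻¹ * (1 - θ)⁻¹ ≤ 1 + η := by
      rw [← mul_inv, inv_le_comm₀ (by positivity) (by positivity), inv_le_iff_one_le_mul₀ (by positivity)]
      rw [hθdef]; nlinarith [mul_pos hη hη]
    calc θ + (1 - θ)⁻¹ * (φ x + θ) ≤ θ + (1 - θ)⁻¹ * (3 * θ + (1 - θ)⁻¹ * M) := by
          exact add_le_add le_rfl (mul_le_mul_of_nonneg_left (by linarith) hinv0.le)
      _ = θ + (1 - θ)⁻¹ * (3 * θ) + (1 - θ)⁻¹ * (1 - θ)⁻¹ * M := by ring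
      _ ≤ θ + 10 / 9 * (3 * θ) + (1 + η) * M := by gcongr
      _ ≤ _ := by rw [hθdef]; linarith

lemma maxOp_lsc {n : ℕ} {δ : ℝ} (hδ : 0 < δ) (hδn : δ ≤ n) (g : (Fin n → ℝ) → ℝ)
    {x : Fin n → ℝ} {c : ℝ≥0∞} (hc : c < maxOp n δ g x) :
    ∀ᶠ y in nhds x, c < maxOp n δ g y := by
  obtain ⟨Q, hxQ, hQ⟩ := exists_cube_of_lt_maxOp hδ hδn hc
  have hctop : c ≠ ⊤ := ne_top_of_lt hc
  have htend : Filter.Tendsto (fun η : ℝ => ENNReal.ofReal (1 + η) * (c * cw δ Q))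
      (nhds 0) (nhds (ENNReal.ofReal (1 + 0) * (c * cw δ Q))) := by
    refine ENNReal.Tendsto.mul_const ?_ (Or.inr (ENNReal.mul_ne_top hctop (cw_ne_top δ Q)))
    exact ENNReal.tendsto_ofReal ((continuous_const.add continuous_id).tendsto 0)
  have hlt : ENNReal.ofReal (1 + 0) * (c * cw δ Q) < integH n δ (fun y => |g y|) Q.toSet := by
    simpa using hQ
  obtain ⟨η, h1, hη⟩ := (((htend.eventually (gt_mem_nhds hlt)).filter_mono
    (nhdsWithin_le_nhds (s := Ioi 0))).and self_mem_nhdsWithin).exists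
  obtain ⟨r, hr, -, hrL⟩ := exists_r hδ Q.side_pos hη
  filter_upwards [Metric.ball_mem_nhds x hr] with y hy
  have h2 := grow_bound hδ hδn g hxQ Q.side_pos hr hrL le_rfl hy
  by_contra hcy
  push Not at hcy
  refine absurd (h1.trans_le h2) (not_lt.2 ?_)
  calc _ ≤ c * (ENNReal.ofReal (1 + η) * cw δ Q) := mul_le_mul_left hcy _
    _ = _ := by ring

lemma qc_log {n : ℕ} {δ : ℝ} (hδ : 0 < δ) (hδn : δ ≤ n) {g : (Fin n → ℝ) → ℝ}
    (hg : MemL1loc n δ g) (hM : AEContent n δ (fun x => maxOp n δ g x < ⊤)) :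
    QuasiCont n δ (fun x => Real.log (maxOp n δ g x).toReal) := by
  intro ε hε
  by_cases hz : ∃ x, maxOp n δ g x = 0
  · obtain ⟨x, hx⟩ := hz
    refine ⟨∅, isOpen_empty, by rw [hContent_empty hδ]; simpa using hε, ?_⟩
    have : (fun x => Real.log (maxOp n δ g x).toReal) = fun _ => 0 := by
      funext y; rw [maxOp_zero_of hδ hδn hx y]; simp
    rw [this]; exact continuousOn_const
  push Not at hz
  have hε2 : ENNReal.ofReal (ε / 2) ≠ 0 := (ENNReal.ofReal_pos.2 (by positivity)).ne'
  obtain ⟨e, he, hesum⟩ := ENNReal.exists_pos_sum_of_countable' hε2 ℕ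
  have hetop : ∀ k, e k ≠ ⊤ := fun k =>
    ne_top_of_lt (lt_of_le_of_lt (ENNReal.le_tsum k) hesum)
  have hloc := fun k : ℕ => local_usc hδ hδn hg k (η := 1 / (k + 1)) (by positivity)
    (by rw [div_le_one (by positivity)]; linarith [(Nat.cast_nonneg k : (0:ℝ) ≤ k)])
    (ε := (e k).toReal) (ENNReal.toReal_pos (he k).ne' (hetop k))
  choose O hO hOε hOusc using hloc
  obtain ⟨a, ha, hopen⟩ := exists_small_open (n := n) (δ := δ) (half_pos hε)
  obtain ⟨P, hP, hPsub, hPε⟩ := hopen {x | ¬ maxOp n δ g x < ⊤} (by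
    rw [show hContent n δ {x | ¬ maxOp n δ g x < ⊤} = 0 from hM]; exact ENNReal.ofReal_pos.2 ha)
  refine ⟨(⋃ k, O k) ∪ P, (isOpen_iUnion hO).union hP, ?_, ?_⟩
  · refine (hContent_union_le hδ _ _).trans_lt ?_
    rw [← add_halves ε, ENNReal.ofReal_add (by positivity) (by positivity)]
    refine ENNReal.add_lt_add (lt_of_le_of_lt ((hContent_iUnion_le O).trans ?_) hesum) hPε
    refine ENNReal.tsum_le_tsum fun k => ?_
    have := (hOε k).le
    rwa [ENNReal.ofReal_toReal (hetop k)] at this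
  · intro x hx
    have hxO : ∀ k, x ∉ O k := fun k h => hx (Or.inl (mem_iUnion.2 ⟨k, h⟩))
    have hxtop : maxOp n δ g x ≠ ⊤ := fun h => hx (Or.inr (hPsub (by simp [h])))
    have hcont : Filter.Tendsto (maxOp n δ g) (nhdsWithin x ((⋃ k, O k) ∪ P)ᶜ)
        (nhds (maxOp n δ g x)) := by
      refine tendsto_order.2 ⟨fun c hc => (maxOp_lsc hδ hδn g hc).filter_mono
        nhdsWithin_le_nhds, fun c hc => ?_⟩
      set M := (maxOp n δ g x).toReal with hMdef
      have htend : Filter.Tendsto (fun k : ℕ => ENNReal.ofReal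
          ((1 + 1 / ((k:ℝ) + 1)) * M + 1 / ((k:ℝ) + 1))) Filter.atTop
          (nhds (ENNReal.ofReal ((1 + 0) * M + 0))) := by
        have h0 := tendsto_one_div_add_atTop_nhds_zero_nat (𝕜 := ℝ)
        exact ENNReal.tendsto_ofReal (((h0.const_add 1).mul_const M).add h0)
      have hlt : ENNReal.ofReal ((1 + 0) * M + 0) < c := by
        simpa [hMdef, ENNReal.ofReal_toReal hxtop] using hc
      obtain ⟨N, hN⟩ := exists_nat_gt ‖x‖
      obtain ⟨k, hk, hkN⟩ := ((htend.eventually (gt_mem_nhds hlt)).and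
        (Filter.eventually_ge_atTop N)).exists
      have h1 := hOusc k x (hxO k) (hN.trans_le (by exact_mod_cast hkN)) hxtop
      filter_upwards [h1.filter_mono nhdsWithin_le_nhds, self_mem_nhdsWithin] with y hy hyO
      exact (hy fun h => hyO (Or.inl (mem_iUnion.2 ⟨k, h⟩))).trans_lt hk
    have h2 := (ENNReal.tendsto_toReal hxtop).comp hcont
    exact h2.log (ENNReal.toReal_ne_zero.2 ⟨hz x, hxtop⟩)

lemma QuasiCont.const_mul {n : ℕ} {δ : ℝ} {f : (Fin n → ℝ) → ℝ} (hf : QuasiCont n δ f) (a : ℝ) :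
    QuasiCont n δ (fun x => a * f x) := by
  intro ε hε
  obtain ⟨O, h1, h2, h3⟩ := hf ε hε
  exact ⟨O, h1, h2, continuousOn_const.mul h3⟩

lemma QuasiCont.add {n : ℕ} {δ : ℝ} (hδ : 0 < δ) {f g : (Fin n → ℝ) → ℝ}
    (hf : QuasiCont n δ f) (hg : QuasiCont n δ g) : QuasiCont n δ (fun x => f x + g x) := by
  intro ε hε
  obtain ⟨O, h1, h2, h3⟩ := hf (ε / 2) (half_pos hε)
  obtain ⟨P, h4, h5, h6⟩ := hg (ε / 2) (half_pos hε)
  refine ⟨O ∪ P, h1.union h4, ?_, (h3.mono ?_).add (h6.mono ?_)⟩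
  · refine (hContent_union_le hδ _ _).trans_lt ?_
    rw [← add_halves ε, ENNReal.ofReal_add (by positivity) (by positivity)]
    exact ENNReal.add_lt_add h2 h5
  · exact compl_subset_compl.2 subset_union_left
  · exact compl_subset_compl.2 subset_union_right

lemma integH_mul_abs_le {n : ℕ} {δ : ℝ} {a : ℝ} (ha : 0 ≤ a) (u : (Fin n → ℝ) → ℝ)
    (A : Set (Fin n → ℝ)) : integH n δ (fun x => a * |u x|) A ≤
      ENNReal.ofReal (a + 1) * integH n δ (fun x => |u x|) A := by
  rw [← integH_const_mul (by linarith)]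
  refine integH_mono subset_rfl fun x _ => ?_
  nlinarith [abs_nonneg (u x)]

theorem stmt8 (n : ℕ) (hn : 1 ≤ n) (δ : ℝ) (hδ0 : 0 < δ) (hδn : δ ≤ n)
    (α β : ℝ) (hα : 0 ≤ α) (hβ : 0 ≤ β)
    (b g₁ g₂ : (Fin n → ℝ) → ℝ) (hb : MemLinf n δ b)
    (hg₁ : MemL1loc n δ g₁) (hg₂ : MemL1loc n δ g₂)
    (hM₁ : AEContent n δ (fun x => maxOp n δ g₁ x < ⊤))
    (hM₂ : AEContent n δ (fun x => maxOp n δ g₂ x < ⊤))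
    (hqc : QuasiCont n δ (fun x =>
      Real.exp (b x) * (maxOp n δ g₁ x).toReal ^ α * (maxOp n δ g₂ x).toReal ^ β)) :
    MemBMO n δ (fun x =>
      α * Real.log (maxOp n δ g₁ x).toReal + β * Real.log (maxOp n δ g₂ x).toReal + b x) := by
  set h₁ : (Fin n → ℝ) → ℝ := fun x => Real.log (maxOp n δ g₁ x).toReal with hh₁
  set h₂ : (Fin n → ℝ) → ℝ := fun x => Real.log (maxOp n δ g₂ x).toReal with hh₂
  change MemBMO n δ (fun x => α * h₁ x + β * h₂ x + b x)
  obtain ⟨hbq, M, hbM⟩ := hb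
  set K : ℝ≥0∞ := 2 * (ENNReal.ofReal (α + 1) * bC δ) + 2 *
    (2 * (ENNReal.ofReal (β + 1) * bC δ) + 2 * ENNReal.ofReal (max M 0)) with hK
  have hKtop : K ≠ ⊤ := by
    have := bC_ne_top δ
    rw [hK]
    finiteness
  have hosc : ∀ Q : Cube n, ∃ c, integH n δ
      (fun x => |α * h₁ x + β * h₂ x + b x - c|) Q.toSet ≤ K * cw δ Q := fun Q => by
    obtain ⟨c₁, hc₁⟩ := bmo_log hδ0 hδn g₁ hM₁ Q
    obtain ⟨c₂, hc₂⟩ := bmo_log hδ0 hδn g₂ hM₂ Q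
    refine ⟨α * c₁ + β * c₂, ?_⟩
    have hb1 : integH n δ (fun x => |b x|) Q.toSet ≤ ENNReal.ofReal (max M 0) * cw δ Q := by
      rw [← hContent_cube hδ0 hδn]
      refine integH_le_of_bdd (le_max_right _ _) ?_
      refine le_antisymm (le_trans (hContent_mono ?_) hbM.le) bot_le
      rintro x ⟨-, hx⟩
      exact not_le.2 ((le_max_left _ _).trans_lt hx)
    have hi1 := integH_mul_abs_le (δ := δ) hα (fun x => h₁ x - c₁) Q.toSet
    have hi2 := integH_mul_abs_le (δ := δ) hβ (fun x => h₂ x - c₂) Q.toSet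
    have hs1 := integH_add_le hδ0 (A := Q.toSet) (u := fun x => β * |h₂ x - c₂| + |b x|)
      (v := fun x => β * |h₂ x - c₂|) (w := fun x => |b x|) (fun x _ => le_rfl)
    have hs2 := integH_add_le hδ0 (A := Q.toSet)
      (u := fun x => |α * h₁ x + β * h₂ x + b x - (α * c₁ + β * c₂)|)
      (v := fun x => α * |h₁ x - c₁|) (w := fun x => β * |h₂ x - c₂| + |b x|) (fun x _ => by
        have e1 : α * h₁ x + β * h₂ x + b x - (α * c₁ + β * c₂) =
          α * (h₁ x - c₁) + (β * (h₂ x - c₂) + b x) := by ring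
        simp only [e1]
        refine (abs_add_le _ _).trans (add_le_add ?_ ((abs_add_le _ _).trans
          (add_le_add ?_ le_rfl)))
        · rw [abs_mul, abs_of_nonneg hα]
        · rw [abs_mul, abs_of_nonneg hβ])
    calc _ ≤ _ := hs2
      _ ≤ 2 * (ENNReal.ofReal (α + 1) * (bC δ * cw δ Q)) + 2 *
          (2 * (ENNReal.ofReal (β + 1) * (bC δ * cw δ Q)) +
            2 * (ENNReal.ofReal (max M 0) * cw δ Q)) := by
        refine add_le_add (mul_le_mul_right (hi1.trans (mul_le_mul_right hc₁ _)) _)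
          (mul_le_mul_right (hs1.trans (add_le_add (mul_le_mul_right
            (hi2.trans (mul_le_mul_right hc₂ _)) _) (mul_le_mul_right hb1 _))) _)
      _ = K * cw δ Q := by rw [hK]; ring
  refine ⟨⟨?_, ?_⟩, ?_⟩
  · exact (((qc_log hδ0 hδn hg₁ hM₁).const_mul α).add hδ0
      ((qc_log hδ0 hδn hg₂ hM₂).const_mul β)).add hδ0 hbq
  · intro A hA
    obtain ⟨R, hR⟩ := Bornology.IsBounded.exists_norm_le (E := Fin n → ℝ) hA.isBounded
    set S : ℝ := max (R + 1) 1 with hS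
    have hS0 : 0 < S := lt_max_of_lt_right one_pos
    set Q : Cube n := ⟨fun _ => -S, 2 * S, by positivity⟩ with hQ
    have hAQ : A ⊆ Q.toSet := fun x hx i => by
      have h1 : |x i| < S := by
        rw [← Real.norm_eq_abs]
        exact (norm_le_pi_norm x i).trans_lt (((hR x hx).trans_lt (lt_add_one R)).trans_le (le_max_left _ _))
      have := abs_lt.1 h1
      simp only [hQ]
      constructor <;> linarith
    obtain ⟨c, hc⟩ := hosc Q
    have h1 := integH_add_le hδ0 (A := Q.toSet)
      (u := fun x => |α * h₁ x + β * h₂ x + b x|)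
      (v := fun x => |α * h₁ x + β * h₂ x + b x - c|) (w := fun _ => |c|) (fun x _ => by
        have := abs_add_le (α * h₁ x + β * h₂ x + b x - c) c
        simpa using this)
    have h2 : integH n δ (fun _ => |c|) Q.toSet ≤ ENNReal.ofReal |c| * hContent n δ Q.toSet := by
      refine integH_le_of_bdd (abs_nonneg c) ?_
      simp [hContent_empty hδ0]
    rw [hContent_cube hδ0 hδn] at h2
    refine ((integH_mono hAQ fun _ _ => le_rfl).trans (h1.trans (add_le_add
      (mul_le_mul_right hc _) (mul_le_mul_right h2 _)))).trans_lt ?_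
    have := cw_ne_top δ Q
    exact lt_top_iff_ne_top.2 (by finiteness)
  · refine lt_of_le_of_lt (iSup_le fun Q => ?_) (lt_top_iff_ne_top.2 hKtop)
    obtain ⟨c, hc⟩ := hosc Q
    refine (iInf_le _ c).trans ?_
    rw [hContent_cube hδ0 hδn]
    exact ENNReal.div_le_of_le_mul hc
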